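/- arXiv:1812.08276 — 5 statements merged into one kernel-verified Lean document; each statement's English description precedes it below -/
import Mathlib

section
/- Let T be a tree (a connected graph with a unique path between any two distinct vertices) such that deg(v) ≤ k for every vertex v, where k ≥ 2 is an integer. Let 1 < p < ∞ and q = p/(p−1). Then the operator norm of the shift operator S on ℓ^p(T) satisfies ‖S‖ ≤ (k−1)^{1/p} + (k−1)^{1/q}. -/
/-- The shift (adjacency) operator: `(Sf)(u) = ∑_{v ~ u} f(v)`. -/
noncomputable def shiftOp {V : Type*} (G : SimpleGraph V) (f : V → ℂ) (u : V) : ℂ :=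
  ∑ᶠ v ∈ G.neighborSet u, f v

/-- The degree of a vertex. -/
noncomputable def gdeg {V : Type*} (G : SimpleGraph V) (v : V) : ℕ :=
  (G.neighborSet v).ncard

/-- Membership in ℓ^p: `∑_{v} |f(v)|^p < ∞`. -/
def memlp {V : Type*} (f : V → ℂ) (p : ℝ) : Prop :=
  Summable fun v => ‖f v‖ ^ p

/-- The ℓ^p norm: `(∑_{v} |f(v)|^p)^{1/p}`. -/
noncomputable def lpnorm {V : Type*} (f : V → ℂ) (p : ℝ) : ℝ :=
  (∑' v, ‖f v‖ ^ p) ^ (1 / p)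


open Finset in
/-- A parent map towards a root `r` of a tree. -/
lemma exists_parent {V : Type*} (T : SimpleGraph V) (htree : T.IsTree) (r : V) :
    ∃ π : V → V, (∀ u, u ≠ r → T.Adj u (π u) ∧ T.dist u r = T.dist (π u) r + 1) ∧
      ∀ u v, T.Adj u v → T.dist u r = T.dist v r + 1 → π u = v := by
  have hex : ∀ u, u ≠ r → ∃ w, T.Adj u w ∧ T.dist u r = T.dist w r + 1 := by
    intro u hu
    obtain ⟨p, hp⟩ := htree.connected.exists_walk_length_eq_dist u r
    cases p with
    | nil => exact absurd rfl hu
    | @cons _ w _ h p =>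
      refine ⟨w, h, ?_⟩
      have h1 := SimpleGraph.dist_le p
      rw [SimpleGraph.Walk.length_cons] at hp
      rcases htree.dist_eq_dist_add_one_of_adj r h with h2 | h2 <;>
        rw [T.dist_comm (u := r) (v := u), T.dist_comm (u := r) (v := w)] at h2 <;> omega
  have huniq : ∀ u v w, T.Adj u v → T.dist u r = T.dist v r + 1 → T.Adj u w →
      T.dist u r = T.dist w r + 1 → v = w := by
    intro u v w hv hdv hw hdw
    obtain ⟨p, hp⟩ := htree.connected.exists_walk_length_eq_dist v r
    obtain ⟨p', hp'⟩ := htree.connected.exists_walk_length_eq_dist w r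
    have e1 : (SimpleGraph.Walk.cons hv p).IsPath :=
      SimpleGraph.Walk.isPath_of_length_eq_dist _ (by simp [hp, hdv])
    have e2 : (SimpleGraph.Walk.cons hw p').IsPath :=
      SimpleGraph.Walk.isPath_of_length_eq_dist _ (by simp [hp', hdw])
    have := (htree.existsUnique_path u r).unique e1 e2
    have h3 := congrArg SimpleGraph.Walk.snd this
    simpa using h3
  classical
  refine ⟨fun u => if hu : u ≠ r then (hex u hu).choose else u, ?_, ?_⟩
  · intro u hu
    simp only [dif_pos hu]
    exact (hex u hu).choose_spec
  · intro u v huv hd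
    have hu : u ≠ r := by
      rintro rfl
      simp at hd
    simp only [dif_pos hu]
    exact huniq u _ _ (hex u hu).choose_spec.1 (hex u hu).choose_spec.2 huv hd

lemma finite_estimate (V : Type*) [Infinite V] (T : SimpleGraph V)
    (htree : T.IsTree) (hlf : ∀ v, (T.neighborSet v).Finite)
    (k : ℕ) (hk : 2 ≤ k) (hdeg : ∀ v, gdeg T v ≤ k)
    (p q : ℝ) (hp : 1 < p) (hq : q = p / (p - 1)) (f : V → ℂ) (hf : memlp f p) (F : Finset V) :
    (∑ u ∈ F, ‖shiftOp T f u‖ ^ p) ^ (1 / p) ≤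
        (((k : ℝ) - 1) ^ (1 / p) + ((k : ℝ) - 1) ^ (1 / q)) * lpnorm f p := by
  classical
  have hp0 : 0 < p := by linarith
  have hk1 : (1 : ℝ) ≤ (k : ℝ) - 1 := by
    have : (2 : ℝ) ≤ k := by exact_mod_cast hk
    linarith
  have hk0 : (0 : ℝ) ≤ (k : ℝ) - 1 := by linarith
  let N : V → Finset V := fun v => (hlf v).toFinset
  have hN : ∀ u v, v ∈ N u ↔ T.Adj u v := by intro u v; simp [N]
  have hNc : ∀ u, (N u).card ≤ k := by
    intro u
    have := hdeg u
    rwa [gdeg, Set.ncard_eq_toFinset_card _ (hlf u)] at this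
  have hS : ∀ u, shiftOp T f u = ∑ v ∈ N u, f v := by
    intro u
    exact finsum_mem_eq_finite_toFinset_sum f (hlf u)
  obtain ⟨r, hr⟩ := Infinite.exists_notMem_finset (F ∪ F.biUnion N)
  simp only [Finset.mem_union, Finset.mem_biUnion, not_or, not_exists, not_and] at hr
  obtain ⟨hrF, hrN⟩ := hr
  obtain ⟨π, h1, h2⟩ := exists_parent T htree r
  have hne : ∀ u ∈ F, u ≠ r := fun u hu h => hrF (h ▸ hu)
  have hcard : ∀ u, u ≠ r → (((N u).erase (π u)).card : ℝ) ≤ (k : ℝ) - 1 := by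
    intro u hu
    have hm : π u ∈ N u := (hN _ _).2 (h1 u hu).1
    have := Finset.card_erase_add_one hm
    have h3 := hNc u
    have : ((N u).erase (π u)).card + 1 ≤ k := by omega
    have : ((((N u).erase (π u)).card : ℝ)) + 1 ≤ k := by exact_mod_cast this
    linarith
  set A : ℝ := ∑' v, ‖f v‖ ^ p with hA
  have hA0 : 0 ≤ A := tsum_nonneg fun v => by positivity
  have hsub : ∀ s : Finset V, ∑ v ∈ s, ‖f v‖ ^ p ≤ A := fun s =>
    Summable.sum_le_tsum s (fun v _ => by positivity) hf
  -- pointwise bound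
  have hpt : ∀ u ∈ F, ‖shiftOp T f u‖ ≤ ‖f (π u)‖ + ∑ v ∈ (N u).erase (π u), ‖f v‖ := by
    intro u hu
    rw [hS]
    refine (norm_sum_le _ _).trans ?_
    rw [Finset.add_sum_erase (N u) (fun v => ‖f v‖) ((hN _ _).2 (h1 u (hne u hu)).1)]
  -- parent part
  have hP : ∑ u ∈ F, ‖f (π u)‖ ^ p ≤ ((k : ℝ) - 1) * A := by
    rw [← Finset.sum_fiberwise_of_maps_to (t := F.image π) (g := π)
      (fun u hu => Finset.mem_image_of_mem π hu)]
    have : ∀ w ∈ F.image π, ∑ u ∈ F with π u = w, ‖f (π u)‖ ^ p ≤ ((k : ℝ) - 1) * ‖f w‖ ^ p := by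
      intro w hw
      have hwr : w ≠ r := by
        rintro rfl
        obtain ⟨u, hu, huw⟩ := Finset.mem_image.1 hw
        exact hrN u hu ((hN _ _).2 (huw ▸ (h1 u (hne u hu)).1))
      have e : ∑ u ∈ F with π u = w, ‖f (π u)‖ ^ p = ∑ u ∈ F with π u = w, ‖f w‖ ^ p :=
        Finset.sum_congr rfl fun u hu => by rw [(Finset.mem_filter.1 hu).2]
      rw [e, Finset.sum_const, nsmul_eq_mul]
      refine mul_le_mul_of_nonneg_right (le_trans ?_ (hcard w hwr)) (by positivity)
      refine Nat.cast_le.2 (Finset.card_le_card ?_)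
      intro u hu
      obtain ⟨huF, huw⟩ := Finset.mem_filter.1 hu
      obtain ⟨ha, hd⟩ := h1 u (hne u huF)
      rw [huw] at ha hd
      refine Finset.mem_erase.2 ⟨?_, (hN _ _).2 ha.symm⟩
      intro h
      have := (h1 w hwr).2
      rw [← h] at this
      omega
    refine (Finset.sum_le_sum this).trans ?_
    rw [← Finset.mul_sum]
    exact mul_le_mul_of_nonneg_left (hsub _) hk0
  -- children part
  have hC : ∑ u ∈ F, (∑ v ∈ (N u).erase (π u), ‖f v‖) ^ p ≤ ((k : ℝ) - 1) ^ (p - 1) * A := by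
    have : ∀ u ∈ F, (∑ v ∈ (N u).erase (π u), ‖f v‖) ^ p ≤
        ((k : ℝ) - 1) ^ (p - 1) * ∑ v ∈ (N u).erase (π u), ‖f v‖ ^ p := by
      intro u hu
      refine (Real.rpow_sum_le_const_mul_sum_rpow_of_nonneg _ hp.le
        (fun i _ => norm_nonneg _)).trans ?_
      refine mul_le_mul_of_nonneg_right ?_ (Finset.sum_nonneg fun v _ => by positivity)
      exact Real.rpow_le_rpow (by positivity) (hcard u (hne u hu)) (by linarith)
    refine (Finset.sum_le_sum this).trans ?_
    rw [← Finset.mul_sum]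
    refine mul_le_mul_of_nonneg_left ?_ (by positivity)
    rw [← Finset.sum_biUnion]
    · exact hsub _
    · have key : ∀ u v, v ∈ (N u).erase (π u) → π v = u := by
        intro u v hv
        obtain ⟨hv1, hv2⟩ := Finset.mem_erase.1 hv
        have ha := (hN _ _).1 hv2
        rcases htree.dist_eq_dist_add_one_of_adj r ha with h | h <;>
          rw [T.dist_comm (u := r) (v := u), T.dist_comm (u := r) (v := v)] at h
        · exact absurd (h2 u v ha h).symm hv1
        · exact h2 v u ha.symm h
      intro u _ u' _ huu'
      refine Finset.disjoint_left.2 fun v hv hv' => huu' ?_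
      rw [← key u v hv, ← key u' v hv']
  have hq' : 1 / q = (p - 1) * (1 / p) := by
    rw [hq]; field_simp
  calc (∑ u ∈ F, ‖shiftOp T f u‖ ^ p) ^ (1 / p)
      ≤ (∑ u ∈ F, (‖f (π u)‖ + ∑ v ∈ (N u).erase (π u), ‖f v‖) ^ p) ^ (1 / p) := by
        refine Real.rpow_le_rpow (Finset.sum_nonneg fun v _ => by positivity) ?_ (by positivity)
        exact Finset.sum_le_sum fun u hu =>
          Real.rpow_le_rpow (norm_nonneg _) (hpt u hu) hp0.le
    _ ≤ (∑ u ∈ F, ‖f (π u)‖ ^ p) ^ (1 / p) +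
        (∑ u ∈ F, (∑ v ∈ (N u).erase (π u), ‖f v‖) ^ p) ^ (1 / p) :=
        Real.Lp_add_le_of_nonneg _ hp.le (fun _ _ => norm_nonneg _)
          (fun _ _ => Finset.sum_nonneg fun _ _ => norm_nonneg _)
    _ ≤ (((k : ℝ) - 1) * A) ^ (1 / p) + (((k : ℝ) - 1) ^ (p - 1) * A) ^ (1 / p) := by
        refine add_le_add (Real.rpow_le_rpow ?_ hP (by positivity))
          (Real.rpow_le_rpow ?_ hC (by positivity)) <;>
        exact Finset.sum_nonneg fun v _ => by positivity
    _ = _ := by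
        rw [Real.mul_rpow hk0 hA0, Real.mul_rpow (by positivity) hA0, ← Real.rpow_mul hk0, hq',
          lpnorm, add_mul]

/-- Let `T` be a tree with `deg v ≤ k` for all `v`, where `k ≥ 2`.
Let `1 < p < ∞` and `q = p/(p−1)`. Then the operator norm of the shift on `ℓ^p(T)`
satisfies `‖S‖ ≤ (k−1)^{1/p} + (k−1)^{1/q}`, i.e. `S` maps `ℓ^p(T)` to itself and
`‖Sf‖_p ≤ ((k−1)^{1/p} + (k−1)^{1/q})‖f‖_p` for every `f ∈ ℓ^p(T)`. -/
theorem stmt5 (V : Type*) [Countable V] [Infinite V] (T : SimpleGraph V)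
    (htree : T.IsTree) (hlf : ∀ v, (T.neighborSet v).Finite)
    (k : ℕ) (hk : 2 ≤ k) (hdeg : ∀ v, gdeg T v ≤ k)
    (p q : ℝ) (hp : 1 < p) (hq : q = p / (p - 1)) :
    ∀ f : V → ℂ, memlp f p →
      memlp (shiftOp T f) p ∧
      lpnorm (shiftOp T f) p ≤
        (((k : ℝ) - 1) ^ (1 / p) + ((k : ℝ) - 1) ^ (1 / q)) * lpnorm f p := by
  intro f hf
  have hp0 : 0 < p := by linarith
  have hfin := finite_estimate V T htree hlf k hk hdeg p q hp hq f hf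
  set B : ℝ := (((k : ℝ) - 1) ^ (1 / p) + ((k : ℝ) - 1) ^ (1 / q)) * lpnorm f p with hB
  have hb : ∀ F : Finset V, ∑ u ∈ F, ‖shiftOp T f u‖ ^ p ≤ B ^ p := by
    intro F
    have h0 : 0 ≤ ∑ u ∈ F, ‖shiftOp T f u‖ ^ p := Finset.sum_nonneg fun v _ => by positivity
    have h := Real.rpow_le_rpow (by positivity) (hfin F) hp0.le
    rwa [← Real.rpow_mul h0, one_div_mul_cancel hp0.ne', Real.rpow_one] at h
  have hB0 : 0 ≤ B := le_trans (by positivity) (hfin ∅)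
  have hsum : memlp (shiftOp T f) p :=
    summable_of_sum_le (fun v => by positivity) hb
  refine ⟨hsum, ?_⟩
  have h : ∑' v, ‖shiftOp T f v‖ ^ p ≤ B ^ p := Summable.tsum_le_of_sum_le hsum hb
  have h3 := Real.rpow_le_rpow (tsum_nonneg fun v => by positivity) h
    (by positivity : (0 : ℝ) ≤ 1 / p)
  rwa [← Real.rpow_mul hB0, mul_one_div_cancel hp0.ne', Real.rpow_one] at h3
end

section
/- Let T be an almost k-regular tree (k ≥ 2): deg(v) ≤ k for every vertex v and deg(v) = k for all but finitely many vertices v. Let 1 < p < ∞ and q = p/(p−1). Then the operator norm of the shift operator S on ℓ^p(T) equals (k−1)^{1/p} + (k−1)^{1/q}. -/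
/-- Rooted structure of a tree: parent map and height. -/
theorem tree_par {V : Type*} (T : SimpleGraph V) (ht : T.IsTree) (o : V) :
    ∃ (par : V → V) (h : V → ℕ), (∀ v, h v = 0 ↔ v = o) ∧
      (∀ v, v ≠ o → T.Adj v (par v) ∧ h v = h (par v) + 1) ∧
      ∀ u v, T.Adj u v → (h u = h v + 1 ∧ v = par u) ∨ (h v = h u + 1 ∧ u = par v) := by
  have key : ∀ v, ∃ w, v ≠ o → (T.Adj v w ∧ T.dist v o = T.dist w o + 1 ∧
      ∀ w', T.Adj v w' → T.dist v o = T.dist w' o + 1 → w' = w) := by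
    intro v
    by_cases hv : v = o
    · exact ⟨v, fun h => absurd hv h⟩
    obtain ⟨P, hP, hPl⟩ := ht.connected.exists_path_of_dist v o
    have hnil : ¬ P.Nil := SimpleGraph.Walk.not_nil_of_ne hv
    have uniq : ∀ w', T.Adj v w' → T.dist v o = T.dist w' o + 1 → w' = P.snd := by
      intro w' ha hd
      obtain ⟨Q, hQ, hQl⟩ := ht.connected.exists_path_of_dist w' o
      have hQ' : (SimpleGraph.Walk.cons ha Q).IsPath := by
        apply SimpleGraph.Walk.isPath_of_length_eq_dist
        simp [hQl, hd]
      have := (ht.existsUnique_path v o).unique hP hQ'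
      rw [this]; simp
    refine ⟨P.snd, fun _ => ⟨P.adj_snd hnil, ?_, uniq⟩⟩
    have h1 := SimpleGraph.dist_le P.tail
    have h2 := SimpleGraph.Walk.length_tail_add_one hnil
    have h3 := ht.connected.dist_triangle (u := v) (v := P.snd) (w := o)
    have h4 := SimpleGraph.dist_eq_one_iff_adj.2 (P.adj_snd hnil)
    omega
  choose par hpar using key
  refine ⟨par, fun v => T.dist v o, ?_, ?_, ?_⟩
  · intro v
    exact ht.connected.dist_eq_zero_iff
  · intro v hv
    exact ⟨(hpar v hv).1, (hpar v hv).2.1⟩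
  · intro u v ha
    have h0 : ∀ a b : V, T.dist a o = T.dist b o + 1 → a ≠ o := by
      rintro a b h rfl
      simp at h
    have := ht.dist_eq_dist_add_one_of_adj o ha
    rw [T.dist_comm (u := o) (v := u), T.dist_comm (u := o) (v := v)] at this
    rcases this with h | h
    · exact Or.inl ⟨h, (hpar u (h0 _ _ h)).2.2 v ha h⟩
    · exact Or.inr ⟨h, (hpar v (h0 _ _ h)).2.2 u ha.symm h⟩

theorem shiftOp_eq {V : Type*} (T : SimpleGraph V) (hlf : ∀ v, (T.neighborSet v).Finite)
    (f : V → ℂ) (u : V) : shiftOp T f u = ∑ v ∈ (hlf u).toFinset, f v := by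
  unfold shiftOp
  rw [finsum_mem_eq_finite_toFinset_sum]

theorem gdeg_eq {V : Type*} (T : SimpleGraph V) (hlf : ∀ v, (T.neighborSet v).Finite)
    (u : V) : gdeg T u = (hlf u).toFinset.card := by
  unfold gdeg
  rw [Set.ncard_eq_toFinset_card _ (hlf u)]

open Classical in
/-- Upper bound on finite sets. -/
theorem upper_fin {V : Type*} [Infinite V] (T : SimpleGraph V)
    (htree : T.IsTree) (hlf : ∀ v, (T.neighborSet v).Finite)
    (k : ℕ) (hk : 2 ≤ k) (hdeg : ∀ v, gdeg T v ≤ k)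
    (p : ℝ) (hp : 1 < p) (f : V → ℂ) (hf : memlp f p) (W : Finset V) :
    (∑ u ∈ W, ‖shiftOp T f u‖ ^ p) ^ (1 / p) ≤
      (((k : ℝ) - 1) ^ (1 / p) + ((k : ℝ) - 1) ^ (1 - 1 / p)) * lpnorm f p := by
  have hp0 : 0 < p := by linarith
  have hd1 : (1 : ℝ) ≤ (k : ℝ) - 1 := by
    have : (2 : ℝ) ≤ k := by exact_mod_cast hk
    linarith
  set d : ℝ := (k : ℝ) - 1 with hd
  set N : V → Finset V := fun u => (hlf u).toFinset with hN
  have memN : ∀ u v, v ∈ N u ↔ T.Adj u v := by intro u v; simp [hN]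
  have cardN : ∀ u, (N u).card ≤ k := fun u => by rw [← gdeg_eq T hlf]; exact hdeg u
  obtain ⟨o, ho⟩ := Infinite.exists_notMem_finset (W ∪ W.biUnion N)
  have hoW : ∀ u ∈ W, u ≠ o := by
    rintro u hu rfl; exact ho (by simp [hu])
  have hoN : ∀ u ∈ W, ∀ v, T.Adj u v → v ≠ o := by
    rintro u hu v ha rfl
    apply ho
    simp only [Finset.mem_union, Finset.mem_biUnion]
    exact Or.inr ⟨u, hu, (memN _ _).2 ha⟩
  obtain ⟨par, h, h0, hpar, hadj⟩ := tree_par T htree o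
  set ch : V → Finset V := fun u => (N u).erase (par u) with hch
  have cardch : ∀ u, u ≠ o → ((ch u).card : ℝ) ≤ d := by
    intro u hu
    have h1 : par u ∈ N u := (memN _ _).2 (hpar u hu).1
    have h2 := Finset.card_erase_add_one h1
    have h3 := cardN u
    have h4 : (ch u).card + 1 ≤ k := by simp only [hch]; omega
    have : ((ch u).card : ℝ) + 1 ≤ k := by exact_mod_cast h4
    linarith
  have memch : ∀ u v, v ∈ ch u → T.Adj u v ∧ par v = u := by
    intro u v hv
    simp only [hch, Finset.mem_erase, memN] at hv
    refine ⟨hv.2, ?_⟩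
    rcases hadj u v hv.2 with h | h
    · exact absurd h.2 hv.1
    · exact h.2.symm
  have nonneg : ∀ v, 0 ≤ ‖f v‖ ^ p := fun v => Real.rpow_nonneg (norm_nonneg _) _
  set X : ℝ := ∑' v, ‖f v‖ ^ p with hX
  have X0 : 0 ≤ X := tsum_nonneg nonneg
  -- first part
  have A1 : ∑ u ∈ W, ‖f (par u)‖ ^ p ≤ d * X := by
    calc ∑ u ∈ W, ‖f (par u)‖ ^ p
        = ∑ v ∈ W.image par, ∑ u ∈ W with par u = v, ‖f (par u)‖ ^ p := by
          exact (Finset.sum_fiberwise_of_maps_to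
            (fun u hu => Finset.mem_image_of_mem par hu) (fun u => ‖f (par u)‖ ^ p)).symm
      _ ≤ ∑ v ∈ W.image par, d * ‖f v‖ ^ p := by
          apply Finset.sum_le_sum
          intro v hv
          obtain ⟨w, hw, rfl⟩ := Finset.mem_image.1 hv
          have hne : par w ≠ o := hoN w hw _ (hpar w (hoW w hw)).1
          rw [Finset.sum_congr rfl (g := fun _ => ‖f (par w)‖ ^ p)
            (fun u hu => by rw [(Finset.mem_filter.1 hu).2]), Finset.sum_const, nsmul_eq_mul]
          refine mul_le_mul_of_nonneg_right (le_trans ?_ (cardch _ hne)) (nonneg _)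
          rw [Nat.cast_le]
          apply Finset.card_le_card
          intro u hu
          obtain ⟨hu1, hu2⟩ := Finset.mem_filter.1 hu
          have hu3 := hpar u (hoW u hu1)
          have hu4 := hpar _ hne
          simp only [hch, Finset.mem_erase, memN]
          refine ⟨?_, hu2 ▸ hu3.1.symm⟩
          intro heq
          rw [← heq] at hu4
          have := hu3.2
          rw [hu2] at this
          omega
      _ = d * ∑ v ∈ W.image par, ‖f v‖ ^ p := by rw [Finset.mul_sum]
      _ ≤ d * X := by
          apply mul_le_mul_of_nonneg_left _ (by linarith)
          exact hf.sum_le_tsum _ (fun i _ => nonneg i)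
  have A2 : ∑ u ∈ W, (∑ v ∈ ch u, ‖f v‖) ^ p ≤ d ^ (p - 1) * X := by
    calc ∑ u ∈ W, (∑ v ∈ ch u, ‖f v‖) ^ p
        ≤ ∑ u ∈ W, d ^ (p - 1) * ∑ v ∈ ch u, ‖f v‖ ^ p := by
          apply Finset.sum_le_sum
          intro u hu
          refine (Real.rpow_sum_le_const_mul_sum_rpow_of_nonneg (ch u) hp.le
            (fun i _ => norm_nonneg (f i))).trans ?_
          refine mul_le_mul_of_nonneg_right ?_ (Finset.sum_nonneg fun i _ => nonneg i)
          exact Real.rpow_le_rpow (by positivity) (cardch u (hoW u hu)) (by linarith)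
      _ = d ^ (p - 1) * ∑ v ∈ W.biUnion ch, ‖f v‖ ^ p := by
          rw [← Finset.mul_sum, Finset.sum_biUnion]
          intro u hu v hv huv
          rw [Function.onFun, Finset.disjoint_left]
          intro x hx hx'
          exact huv ((memch u x hx).2.symm.trans (memch v x hx').2)
      _ ≤ d ^ (p - 1) * X := by
          apply mul_le_mul_of_nonneg_left _ (Real.rpow_nonneg (by linarith) _)
          exact hf.sum_le_tsum _ (fun i _ => nonneg i)
  have hS : ∀ u ∈ W, ‖shiftOp T f u‖ ≤ ‖f (par u)‖ + ∑ v ∈ ch u, ‖f v‖ := by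
    intro u hu
    have h1 : par u ∈ N u := (memN _ _).2 (hpar u (hoW u hu)).1
    rw [shiftOp_eq T hlf]
    change ‖∑ v ∈ N u, f v‖ ≤ _
    rw [← Finset.add_sum_erase _ _ h1]
    exact (norm_add_le _ _).trans (add_le_add le_rfl (norm_sum_le _ _))
  have hip : 0 ≤ 1 / p := by positivity
  calc (∑ u ∈ W, ‖shiftOp T f u‖ ^ p) ^ (1 / p)
      ≤ (∑ u ∈ W, (‖f (par u)‖ + ∑ v ∈ ch u, ‖f v‖) ^ p) ^ (1 / p) := by
        apply Real.rpow_le_rpow (Finset.sum_nonneg fun i _ => by positivity) _ hip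
        apply Finset.sum_le_sum
        intro u hu
        exact Real.rpow_le_rpow (norm_nonneg _) (hS u hu) hp0.le
    _ ≤ (∑ u ∈ W, ‖f (par u)‖ ^ p) ^ (1 / p) +
        (∑ u ∈ W, (∑ v ∈ ch u, ‖f v‖) ^ p) ^ (1 / p) := by
        apply Real.Lp_add_le_of_nonneg W hp.le
        · intro i _; positivity
        · intro i _; positivity
    _ ≤ (d * X) ^ (1 / p) + (d ^ (p - 1) * X) ^ (1 / p) := by
        apply add_le_add
        · exact Real.rpow_le_rpow (Finset.sum_nonneg fun i _ => by positivity) A1 hip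
        · exact Real.rpow_le_rpow (Finset.sum_nonneg fun i _ => by positivity) A2 hip
    _ = (d ^ (1 / p) + d ^ (1 - 1 / p)) * lpnorm f p := by
        unfold lpnorm
        rw [Real.mul_rpow (by linarith) X0,
          Real.mul_rpow (Real.rpow_nonneg (by linarith) _) X0, ← Real.rpow_mul (by linarith)]
        have : (p - 1) * (1 / p) = 1 - 1 / p := by field_simp
        rw [this, ← hX]
        ring

theorem upper {V : Type*} [Infinite V] (T : SimpleGraph V)
    (htree : T.IsTree) (hlf : ∀ v, (T.neighborSet v).Finite)
    (k : ℕ) (hk : 2 ≤ k) (hdeg : ∀ v, gdeg T v ≤ k)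
    (p : ℝ) (hp : 1 < p) (f : V → ℂ) (hf : memlp f p) :
    memlp (shiftOp T f) p ∧ lpnorm (shiftOp T f) p ≤
      (((k : ℝ) - 1) ^ (1 / p) + ((k : ℝ) - 1) ^ (1 - 1 / p)) * lpnorm f p := by
  have hp0 : 0 < p := by linarith
  set B := (((k : ℝ) - 1) ^ (1 / p) + ((k : ℝ) - 1) ^ (1 - 1 / p)) * lpnorm f p with hB
  have key : ∀ W : Finset V, ∑ u ∈ W, ‖shiftOp T f u‖ ^ p ≤ B ^ p := by
    intro W
    have h := upper_fin T htree hlf k hk hdeg p hp f hf W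
    have hs : 0 ≤ ∑ u ∈ W, ‖shiftOp T f u‖ ^ p := Finset.sum_nonneg fun i _ => by positivity
    have h2 := Real.rpow_le_rpow (Real.rpow_nonneg hs _) h hp0.le
    rwa [← Real.rpow_mul hs, one_div_mul_cancel hp0.ne', Real.rpow_one] at h2
  have hB0 : 0 ≤ B := by
    have h := upper_fin T htree hlf k hk hdeg p hp f hf ∅
    exact le_trans (Real.rpow_nonneg (by simp) _) h
  refine ⟨summable_of_sum_le (fun i => by positivity) key, ?_⟩
  unfold lpnorm
  have h1 : ∑' v, ‖shiftOp T f v‖ ^ p ≤ B ^ p :=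
    Real.tsum_le_of_sum_le (fun i => by positivity) key
  have h2 := Real.rpow_le_rpow (tsum_nonneg fun i => by positivity) h1
    (by positivity : 0 ≤ 1 / p)
  rwa [← Real.rpow_mul hB0, mul_one_div_cancel hp0.ne', Real.rpow_one] at h2

open Classical in
/-- Test functions for the lower bound. -/
theorem lower_test {V : Type*} [Infinite V] (T : SimpleGraph V)
    (htree : T.IsTree) (hlf : ∀ v, (T.neighborSet v).Finite)
    (k : ℕ) (hk : 2 ≤ k) (hcof : {v | gdeg T v ≠ k}.Finite)
    (p : ℝ) (hp : 1 < p) (M : ℕ) :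
    ∃ (f : V → ℂ) (c : ℝ) (F : Finset V), 0 < c ∧ memlp f p ∧
      ∑' v, ‖f v‖ ^ p = (M + 2) * c ∧
      ∑ v ∈ F, ‖shiftOp T f v‖ ^ p =
        (((k : ℝ) - 1) ^ (1 / p) + ((k : ℝ) - 1) ^ (1 - 1 / p)) ^ p * (M * c) := by
  have hp0 : 0 < p := by linarith
  have hd1 : (1 : ℝ) ≤ (k : ℝ) - 1 := by
    have : (2 : ℝ) ≤ k := by exact_mod_cast hk
    linarith
  have hdk : ((k - 1 : ℕ) : ℝ) = (k : ℝ) - 1 := by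
    rw [Nat.cast_sub (by omega)]; simp
  set d : ℝ := (k : ℝ) - 1 with hd
  have hd0 : 0 < d := by linarith
  set N : V → Finset V := fun u => (hlf u).toFinset with hN
  have memN : ∀ u v, v ∈ N u ↔ T.Adj u v := by intro u v; simp [hN]
  obtain ⟨o⟩ : Nonempty V := inferInstance
  obtain ⟨par, h, h0, hpar, hadj⟩ := tree_par T htree o
  have hne : ∀ v, h v ≠ 0 → v ≠ o := fun v hv => fun e => hv ((h0 v).2 e)
  -- levels
  have hfin : ∀ n, {v | h v = n}.Finite := by
    intro n
    induction n with
    | zero => exact (Set.finite_singleton o).subset fun v hv => (h0 v).1 hv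
    | succ n ih =>
      refine (ih.biUnion (fun u _ => hlf u)).subset ?_
      intro v hv
      have hv' : h v = n + 1 := hv
      have h1 := hpar v (hne v (by omega))
      simp only [Set.mem_iUnion]
      exact ⟨par v, by simp only [Set.mem_setOf_eq]; omega, h1.1.symm⟩
  set L : ℕ → Finset V := fun n => (hfin n).toFinset with hL
  have memL : ∀ n v, v ∈ L n ↔ h v = n := by intro n v; simp [hL]
  have Lne : ∀ n, (L n).Nonempty := by
    intro n
    by_contra hcon
    have hemp : ∀ m, ∀ v, h v ≠ n + m := by
      intro m
      induction m with
      | zero =>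
        intro v hv
        exact hcon ⟨v, (memL _ _).2 (by simpa using hv)⟩
      | succ m ih =>
        intro v hv
        have h1 := hpar v (hne v (by omega))
        exact ih (par v) (by omega)
    have : (Set.univ : Set V).Finite := by
      refine ((Finset.range n).finite_toSet.biUnion (fun m _ => hfin m)).subset ?_
      intro v _
      simp only [Set.mem_iUnion]
      refine ⟨h v, ?_, rfl⟩
      simp only [Finset.coe_range, Set.mem_Iio]
      by_contra hge
      exact hemp (h v - n) v (by omega)
    exact Set.infinite_univ this
  obtain ⟨n0, hn0, hn1⟩ : ∃ n0, 1 ≤ n0 ∧ ∀ v, n0 ≤ h v → (N v).card = k := by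
    refine ⟨hcof.toFinset.sup h + 1, by omega, ?_⟩
    intro v hv
    rw [← gdeg_eq T hlf]
    by_contra hcon
    have : h v ≤ hcof.toFinset.sup h := Finset.le_sup (by simpa using hcon)
    omega
  have cardch : ∀ v, n0 ≤ h v → ((N v).erase (par v)).card = k - 1 := by
    intro v hv
    rw [Finset.card_erase_of_mem ((memN _ _).2 (hpar v (hne v (by omega))).1), hn1 v hv]
  have memch : ∀ v, h v ≠ 0 → ∀ u, u ∈ (N v).erase (par v) ↔ (h u = h v + 1 ∧ par u = v) := by
    intro v hv u
    rw [Finset.mem_erase, memN]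
    constructor
    · rintro ⟨h1, h2⟩
      rcases hadj v u h2 with h3 | h3
      · exact absurd h3.2 h1
      · exact ⟨h3.1, h3.2.symm⟩
    · rintro ⟨h1, rfl⟩
      refine ⟨?_, (hpar u (hne u (by omega))).1.symm⟩
      intro e
      have := (hpar _ (hne _ hv)).2
      rw [← e] at this
      omega
  have cardL : ∀ n, n0 ≤ n → (L (n + 1)).card = (k - 1) * (L n).card := by
    intro n hn
    rw [Finset.card_eq_sum_card_fiberwise (f := par) (s := L (n + 1)) (t := L n)]
    · rw [Finset.sum_congr rfl (g := fun _ => k - 1), Finset.sum_const, smul_eq_mul, mul_comm]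
      intro v hv
      have hv' := (memL _ _).1 hv
      rw [← cardch v (by omega)]
      congr 1
      ext u
      rw [Finset.mem_filter, memL, memch v (by omega), hv']
    · intro v hv
      have hv' := (memL _ _).1 hv
      have := hpar v (hne v (by omega))
      exact (memL _ _).2 (by omega)
  set c : ℝ := (L n0).card * (d⁻¹) ^ n0 with hc
  have cval : ∀ n, n0 ≤ n → ((L n).card : ℝ) * (d⁻¹) ^ n = c := by
    intro n hn
    induction n, hn using Nat.le_induction with
    | base => rfl
    | succ n hn ih =>
      rw [cardL n hn, ← ih, Nat.cast_mul, hdk, pow_succ]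
      field_simp
  have c0 : 0 < c := by
    have : 0 < (L n0).card := (Lne n0).card_pos
    positivity
  set s : ℝ := d ^ (-(1 / p)) with hs
  have s0 : 0 < s := Real.rpow_pos_of_pos hd0 _
  have sp : ∀ n : ℕ, (s ^ n) ^ p = (d⁻¹) ^ n := by
    intro n
    rw [← Real.rpow_natCast, ← Real.rpow_mul s0.le, mul_comm, Real.rpow_mul s0.le,
      Real.rpow_natCast, hs, ← Real.rpow_mul hd0.le]
    have : -(1 / p) * p = -1 := by field_simp
    rw [this, Real.rpow_neg_one]
  set C0 : ℝ := d ^ (1 / p) + d ^ (1 - 1 / p) with hC0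
  have C0pos : 0 < C0 := add_pos (Real.rpow_pos_of_pos hd0 _) (Real.rpow_pos_of_pos hd0 _)
  have sC : ∀ n : ℕ, s ^ n + d * s ^ (n + 2) = C0 * s ^ (n + 1) := by
    intro n
    have e1 : d ^ (1 / p) * s = 1 := by
      rw [hs, ← Real.rpow_add hd0]; simp
    have e2 : d ^ (1 - 1 / p) = d * s := by
      rw [hs, sub_eq_add_neg, Real.rpow_add hd0, Real.rpow_one]
    rw [hC0, e2]
    linear_combination (-s ^ n) * e1
  -- sums over levels
  have sumL : ∀ (a b : ℕ) (g : V → ℝ) (K : ℝ), n0 ≤ a →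
      (∀ v, a ≤ h v → h v < a + b → g v = K * (d⁻¹) ^ (h v)) →
      ∑ v ∈ (Finset.Ico a (a + b)).biUnion L, g v = K * (b * c) := by
    intro a b g K ha hg
    rw [Finset.sum_biUnion]
    · rw [Finset.sum_congr rfl (g := fun _ => K * c)]
      · simp; ring
      · intro n hn
        rw [Finset.mem_Ico] at hn
        rw [Finset.sum_congr rfl (g := fun _ => K * (d⁻¹) ^ n)]
        · rw [Finset.sum_const, nsmul_eq_mul, ← cval n (by omega)]; ring
        · intro v hv
          have hv' := (memL _ _).1 hv
          rw [hg v (by omega) (by omega), hv']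
    · intro m _ n _ hmn
      rw [Function.onFun, Finset.disjoint_left]
      intro x hx hx'
      rw [memL] at hx hx'
      omega
  set f : V → ℂ := fun v => if n0 ≤ h v ∧ h v < n0 + (M + 2) then ((s ^ (h v) : ℝ) : ℂ) else 0
    with hf
  have f1 : ∀ v, n0 ≤ h v → h v < n0 + (M + 2) → f v = ((s ^ (h v) : ℝ) : ℂ) := by
    intro v h1 h2
    simp only [hf]
    rw [if_pos ⟨h1, h2⟩]
  have f2 : ∀ v, v ∉ (Finset.Ico n0 (n0 + (M + 2))).biUnion L → ‖f v‖ ^ p = 0 := by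
    intro v hv
    have : ¬ (n0 ≤ h v ∧ h v < n0 + (M + 2)) := by
      intro hcon
      exact hv (Finset.mem_biUnion.2 ⟨h v, Finset.mem_Ico.2 hcon, (memL _ _).2 rfl⟩)
    simp only [hf]
    rw [if_neg this, norm_zero, Real.zero_rpow hp0.ne']
  refine ⟨f, c, (Finset.Ico (n0 + 1) (n0 + 1 + M)).biUnion L, c0,
    summable_of_ne_finset_zero f2, ?_, ?_⟩
  · rw [tsum_eq_sum f2, sumL n0 (M + 2) _ 1 le_rfl]
    · push_cast; ring
    · intro v h1 h2
      rw [f1 v h1 h2, Complex.norm_real, Real.norm_of_nonneg (by positivity), sp, one_mul]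
  · apply sumL (n0 + 1) M _ _ (by omega)
    intro v h1 h2
    have hv := hpar v (hne v (by omega))
    have e : shiftOp T f v = ((C0 * s ^ (h v) : ℝ) : ℂ) := by
      rw [shiftOp_eq T hlf]
      change ∑ u ∈ N v, f u = _
      rw [← Finset.add_sum_erase _ _ ((memN _ _).2 hv.1), f1 (par v) (by omega) (by omega),
        Finset.sum_congr rfl (g := fun _ => ((s ^ (h v + 1) : ℝ) : ℂ)), Finset.sum_const,
        cardch v (by omega), nsmul_eq_mul]
      · have := sC (h (par v))
        rw [hv.2, ← this, ← hdk]
        push_cast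
        ring
      · intro u hu
        have := ((memch v (by omega) u).1 hu).1
        rw [f1 u (by omega) (by omega), this]
    rw [e, Complex.norm_real, Real.norm_of_nonneg (by positivity),
      Real.mul_rpow C0pos.le (by positivity), sp]

/-- Let `T` be an almost `k`-regular tree (`k ≥ 2`): `deg v ≤ k`
everywhere and `deg v = k` for all but finitely many `v`. Let `1 < p < ∞` and
`q = p/(p−1)`. Then the operator norm of the shift on `ℓ^p(T)` equals
`(k−1)^{1/p} + (k−1)^{1/q}` (expressed as: this number is the least constant `C ≥ 0`
such that `S` maps `ℓ^p(T)` into itself with `‖Sf‖_p ≤ C‖f‖_p`). -/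
theorem stmt6 (V : Type*) [Countable V] [Infinite V] (T : SimpleGraph V)
    (htree : T.IsTree) (hlf : ∀ v, (T.neighborSet v).Finite)
    (k : ℕ) (hk : 2 ≤ k) (hdeg : ∀ v, gdeg T v ≤ k)
    (hcof : {v | gdeg T v ≠ k}.Finite)
    (p q : ℝ) (hp : 1 < p) (hq : q = p / (p - 1)) :
    IsLeast {C : ℝ | 0 ≤ C ∧ ∀ f : V → ℂ, memlp f p →
        memlp (shiftOp T f) p ∧ lpnorm (shiftOp T f) p ≤ C * lpnorm f p}
      (((k : ℝ) - 1) ^ (1 / p) + ((k : ℝ) - 1) ^ (1 / q)) := by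

  have hp0 : 0 < p := by linarith
  have hq' : 1 / q = 1 - 1 / p := by
    have : p - 1 ≠ 0 := by linarith
    rw [hq]; field_simp
  have hk1 : (0 : ℝ) < (k : ℝ) - 1 := by
    have : (2 : ℝ) ≤ k := by exact_mod_cast hk
    linarith
  rw [hq']
  have C0pos : 0 < ((k : ℝ) - 1) ^ (1 / p) + ((k : ℝ) - 1) ^ (1 - 1 / p) :=
    add_pos (Real.rpow_pos_of_pos hk1 _) (Real.rpow_pos_of_pos hk1 _)
  refine ⟨⟨C0pos.le, fun f hf => upper T htree hlf k hk hdeg p hp f hf⟩, ?_⟩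
  rintro C ⟨hC0, hC⟩
  by_contra hlt
  push Not at hlt
  set C0 : ℝ := ((k : ℝ) - 1) ^ (1 / p) + ((k : ℝ) - 1) ^ (1 - 1 / p) with hC0def
  have hpow : C ^ p < C0 ^ p := Real.rpow_lt_rpow hC0 hlt hp0
  obtain ⟨M, hM⟩ := exists_nat_gt (2 * C ^ p / (C0 ^ p - C ^ p))
  rw [div_lt_iff₀ (by linarith)] at hM
  obtain ⟨f, c, F, c0, hf, hsum, hF⟩ := lower_test T htree hlf k hk hcof p hp M
  obtain ⟨hm, hle⟩ := hC f hf
  have hS0 : 0 ≤ ∑' v, ‖shiftOp T f v‖ ^ p := tsum_nonneg fun v => by positivity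
  have h1 : ∑' v, ‖shiftOp T f v‖ ^ p ≤ C ^ p * ((M + 2) * c) := by
    unfold lpnorm at hle
    rw [hsum] at hle
    have h2 := Real.rpow_le_rpow (Real.rpow_nonneg hS0 _) hle hp0.le
    rwa [← Real.rpow_mul hS0, one_div_mul_cancel hp0.ne', Real.rpow_one,
      Real.mul_rpow hC0 (by positivity), ← Real.rpow_mul (by positivity),
      one_div_mul_cancel hp0.ne', Real.rpow_one] at h2
  have h2 : ∑ v ∈ F, ‖shiftOp T f v‖ ^ p ≤ ∑' v, ‖shiftOp T f v‖ ^ p :=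
    hm.sum_le_tsum _ fun v _ => by positivity
  rw [hF] at h2
  have h3 : (C0 ^ p * M) * c ≤ (C ^ p * (M + 2)) * c := by
    calc (C0 ^ p * M) * c = C0 ^ p * (M * c) := by ring
      _ ≤ C ^ p * ((M + 2) * c) := h2.trans h1
      _ = _ := by ring
  have h4 := le_of_mul_le_mul_right h3 c0
  linarith
end

section
/- Let T be a leafless rooted tree of bounded degree, and let M and m be the essential maximum and minimum branching numbers of T. If m > 1 and log_m(M) + 1 < p < ∞, then the kernel of the shift operator on ℓ^p(T) is nontrivial: there exists f ∈ ℓ^p(T), f ≠ 0, with Sf = 0. Moreover, for any such T (m ≥ 1) the kernel of the shift operator on ℓ^∞(T) is nontrivial. -/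
/-- The children of a vertex `v` of the tree `T` rooted at `o`. -/
def children {V : Type*} (T : SimpleGraph V) (o v : V) : Set V :=
  {u | T.Adj v u ∧ T.dist o u = T.dist o v + 1}

/-- `β(v)`: the number of children of `v`. -/
noncomputable def br {V : Type*} (T : SimpleGraph V) (o v : V) : ℕ :=
  (children T o v).ncard

/-- The set `𝓜` of vertices whose branching number is attained infinitely often. -/
def essSet {V : Type*} (T : SimpleGraph V) (o : V) : Set V :=
  {v | {w | br T o w = br T o v}.Infinite}

/-- Every non-root vertex has a parent. -/
lemma exists_par {V : Type*} {T : SimpleGraph V} (htree : T.IsTree) (o v : V) (hv : T.dist o v ≠ 0) :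
    ∃ u, v ∈ children T o u := by
  obtain ⟨w, hw⟩ := htree.connected.exists_walk_length_eq_dist v o
  cases w with
  | nil => simp at hv
  | cons h q =>
    rename_i u
    refine ⟨u, h.symm, ?_⟩
    have h1 := SimpleGraph.dist_le q
    rw [SimpleGraph.Walk.length_cons, SimpleGraph.dist_comm] at hw
    rw [SimpleGraph.dist_comm] at h1
    have := htree.dist_eq_dist_add_one_of_adj o h
    omega

/-- The parent is unique. -/
lemma par_unique {V : Type*} {T : SimpleGraph V} (htree : T.IsTree) (o v u u' : V)
    (h : v ∈ children T o u) (h' : v ∈ children T o u') : u = u' := by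
  obtain ⟨p, hp⟩ := htree.connected.exists_walk_length_eq_dist o u
  obtain ⟨q, hq⟩ := htree.connected.exists_walk_length_eq_dist o u'
  have e := (htree.existsUnique_path o v).unique
    (SimpleGraph.Walk.isPath_of_length_eq_dist (p.concat h.1)
      (by rw [SimpleGraph.Walk.length_concat, hp, h.2]))
    (SimpleGraph.Walk.isPath_of_length_eq_dist (q.concat h'.1)
      (by rw [SimpleGraph.Walk.length_concat, hq, h'.2]))
  have := congrArg SimpleGraph.Walk.penultimate e
  simpa using this

lemma children_finite {V : Type*} {T : SimpleGraph V} (hlf : ∀ v, (T.neighborSet v).Finite)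
    (o v : V) : (children T o v).Finite :=
  (hlf v).subset fun _ h => h.1

open Classical in
/-- The parent map (junk at the root). -/
noncomputable def parFn {V : Type*} (T : SimpleGraph V) (o v : V) : V :=
  if h : ∃ u, v ∈ children T o u then h.choose else o

lemma parFn_eq {V : Type*} {T : SimpleGraph V} (htree : T.IsTree) {o v u : V}
    (h : v ∈ children T o u) : parFn T o v = u := by
  have hex : ∃ u, v ∈ children T o u := ⟨u, h⟩
  rw [parFn, dif_pos hex]
  exact par_unique htree o v _ _ hex.choose_spec h

lemma mem_children_parFn {V : Type*} {T : SimpleGraph V} (htree : T.IsTree) {o v : V}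
    (hv : T.dist o v ≠ 0) : v ∈ children T o (parFn T o v) := by
  have hex := exists_par htree o v hv
  rw [parFn, dif_pos hex]
  exact hex.choose_spec

/-- The kernel function, by levels. -/
noncomputable def kerLvl {V : Type*} (T : SimpleGraph V) (o : V) : ℕ → V → ℂ
  | 0, _ => 1
  | 1, _ => 0
  | n + 2, v => - kerLvl T o n (parFn T o (parFn T o v)) / (br T o (parFn T o v) : ℂ)

noncomputable def kerFn {V : Type*} (T : SimpleGraph V) (o : V) (v : V) : ℂ :=
  kerLvl T o (T.dist o v) v

lemma kerLvl_odd {V : Type*} (T : SimpleGraph V) (o : V) (n : ℕ) :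
    ∀ v, kerLvl T o (2 * n + 1) v = 0 := by
  induction n with
  | zero => intro v; rfl
  | succ n ih =>
    intro v
    show kerLvl T o ((2 * n + 1) + 2) v = 0
    rw [kerLvl, ih]; simp

lemma kerFn_odd {V : Type*} (T : SimpleGraph V) (o v : V) (h : Odd (T.dist o v)) :
    kerFn T o v = 0 := by
  obtain ⟨n, hn⟩ := h
  rw [kerFn, hn, kerLvl_odd]

lemma kerFn_grand {V : Type*} {T : SimpleGraph V} (htree : T.IsTree) {o x c w : V}
    (hc : c ∈ children T o x) (hw : w ∈ children T o c) :
    kerFn T o w = - kerFn T o x / (br T o c : ℂ) := by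
  have : T.dist o w = T.dist o x + 2 := by rw [hw.2, hc.2]
  rw [kerFn, this, kerLvl, parFn_eq htree hw, parFn_eq htree hc, kerFn]

lemma br_pos {V : Type*} {T : SimpleGraph V} (hlf : ∀ v, (T.neighborSet v).Finite) (o : V)
    (hleafless : ∀ v, (children T o v).Nonempty) (v : V) : 0 < br T o v :=
  (Set.ncard_pos (children_finite hlf o v)).2 (hleafless v)

lemma kerFn_shift {V : Type*} {T : SimpleGraph V} (htree : T.IsTree)
    (hlf : ∀ v, (T.neighborSet v).Finite) (o : V)
    (hleafless : ∀ v, (children T o v).Nonempty) (u : V) : shiftOp T (kerFn T o) u = 0 := by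
  rw [shiftOp]
  rcases Nat.even_or_odd (T.dist o u) with h | h
  · apply finsum_mem_eq_zero_of_forall_eq_zero
    intro v hv
    apply kerFn_odd
    rcases htree.dist_eq_dist_add_one_of_adj o hv with e | e
    · grind
    · grind
  · have h0 : T.dist o u ≠ 0 := by grind
    have hp := mem_children_parFn htree h0
    set x := parFn T o u with hx
    have hset : T.neighborSet u = insert x (children T o u) := by
      ext v
      constructor
      · intro hv
        rcases htree.dist_eq_dist_add_one_of_adj o hv with e | e
        · left
          exact par_unique htree o u v x ⟨hv.symm, e⟩ hp
        · right
          exact ⟨hv, e⟩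
      · rintro (rfl | hv)
        · exact hp.1.symm
        · exact hv.1
    have hnot : x ∉ children T o u := by
      intro hh
      have h1 := hh.2
      have h2 := hp.2
      omega
    rw [hset, finsum_mem_insert _ hnot (children_finite hlf o u),
      finsum_mem_eq_finite_toFinset_sum _ (children_finite hlf o u),
      Finset.sum_congr rfl (g := fun _ => - kerFn T o x / (br T o u : ℂ)), Finset.sum_const,
      ← Set.ncard_eq_toFinset_card _ (children_finite hlf o u)]
    · have : (br T o u : ℂ) ≠ 0 := by
        exact_mod_cast (br_pos hlf o hleafless u).ne'
      rw [nsmul_eq_mul]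
      change _ + (br T o u : ℂ) * _ = 0
      field_simp
      ring
    · intro w hw
      exact kerFn_grand htree hp (by simpa using hw)

lemma kerLvl_bdd {V : Type*} {T : SimpleGraph V}
    (hlf : ∀ v, (T.neighborSet v).Finite) (o : V)
    (hleafless : ∀ v, (children T o v).Nonempty) (n : ℕ) : ∀ v, ‖kerLvl T o n v‖ ≤ 1 := by
  induction n using Nat.strong_induction_on with
  | _ n ih =>
    intro v
    match n, ih with
    | 0, _ => simp [kerLvl]
    | 1, _ => simp [kerLvl]
    | n + 2, ih =>
      rw [kerLvl, norm_div, norm_neg, Complex.norm_natCast]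
      have h1 : (1 : ℝ) ≤ br T o (parFn T o v) := by exact_mod_cast br_pos hlf o hleafless _
      exact div_le_one_of_le₀ ((ih n (by omega) _).trans h1) (by positivity)

lemma ball_finite {V : Type*} {T : SimpleGraph V} (htree : T.IsTree)
    (hlf : ∀ v, (T.neighborSet v).Finite) (o : V) (n : ℕ) : {v | T.dist o v ≤ n}.Finite := by
  induction n with
  | zero =>
    apply (Set.finite_singleton o).subset
    intro v hv
    have : T.dist o v = 0 := by simpa using hv
    exact ((htree.connected.dist_eq_zero_iff).1 this).symm
  | succ n ih =>
    apply (ih.union (ih.biUnion fun v _ => children_finite hlf o v)).subset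
    intro v hv
    by_cases h : T.dist o v ≤ n
    · exact Or.inl h
    · right
      have hv' : T.dist o v ≤ n + 1 := hv
      have hp := mem_children_parFn htree (o := o) (v := v) (by omega)
      refine Set.mem_biUnion (x := parFn T o v) ?_ hp
      have := hp.2
      show T.dist o (parFn T o v) ≤ n
      omega

/-- Outside a ball, branching numbers are between `m` and `M`. -/
lemma exists_level {V : Type*} {T : SimpleGraph V}
    (hlf : ∀ v, (T.neighborSet v).Finite)
    (o : V) (hbdd : ∃ D : ℕ, ∀ v, gdeg T v ≤ D)
    (M m : ℕ)
    (hM : IsGreatest (br T o '' essSet T o) M)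
    (hm : IsLeast (br T o '' essSet T o) m) :
    ∃ N : ℕ, ∀ v, N ≤ T.dist o v → m ≤ br T o v ∧ br T o v ≤ M := by
  obtain ⟨D, hD⟩ := hbdd
  have hbD : ∀ v, br T o v ≤ D := fun v =>
    (Set.ncard_le_ncard (fun _ h => h.1) (hlf v)).trans (hD v)
  have hfin : (essSet T o)ᶜ.Finite := by
    have : ((essSet T o)ᶜ) ⊆ ⋃ k ∈ {k | k ≤ D ∧ {w | br T o w = k}.Finite}, {w | br T o w = k} := by
      intro v hv
      refine Set.mem_biUnion (x := br T o v) ⟨hbD v, ?_⟩ rfl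
      exact Set.not_infinite.1 hv
    refine Set.Finite.subset (Set.Finite.biUnion ?_ fun k hk => hk.2) this
    exact (Set.finite_Iic D).subset fun k hk => hk.1
  obtain ⟨N, hN⟩ := (hfin.image (T.dist o)).bddAbove
  refine ⟨N + 1, fun v hv => ?_⟩
  have hv' : v ∈ essSet T o := by
    by_contra hcon
    have := hN ⟨v, hcon, rfl⟩
    omega
  exact ⟨hm.2 ⟨v, hv', rfl⟩, hM.2 ⟨v, hv', rfl⟩⟩

open Classical in
lemma step_bound {V : Type*} {T : SimpleGraph V} (htree : T.IsTree)
    (hlf : ∀ v, (T.neighborSet v).Finite) (o : V)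
    (M m : ℕ) (N : ℕ) (hm1 : 1 < m)
    (hN : ∀ v, N ≤ T.dist o v → m ≤ br T o v ∧ br T o v ≤ M) (p : ℝ) (hp : 1 ≤ p)
    (s : Finset V) (hs : ∀ w ∈ s, N + 2 ≤ T.dist o w) :
    ∑ w ∈ s, ‖kerFn T o w‖ ^ p ≤ (M * (m : ℝ) ^ (1 - p)) *
      ∑ x ∈ s.image (fun w => parFn T o (parFn T o w)), ‖kerFn T o x‖ ^ p := by
  rw [← Finset.sum_fiberwise_of_maps_to (t := s.image (fun w => parFn T o (parFn T o w)))
    (g := fun w => parFn T o (parFn T o w)) (fun w hw => Finset.mem_image_of_mem _ hw), Finset.mul_sum]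
  have key : ∀ w ∈ s, w ∈ children T o (parFn T o w) ∧
      parFn T o w ∈ children T o (parFn T o (parFn T o w)) := by
    intro w hw
    have h1 := hs w hw
    have h2 := mem_children_parFn htree (o := o) (v := w) (by omega)
    have h3 := h2.2
    exact ⟨h2, mem_children_parFn htree (by omega)⟩
  apply Finset.sum_le_sum
  intro x hx
  have hxN : N ≤ T.dist o x := by
    obtain ⟨w, hw, rfl⟩ := Finset.mem_image.1 hx
    have h1 := (key w hw).1.2
    have h2 := (key w hw).2.2
    have := hs w hw
    omega
  rw [← Finset.sum_fiberwise_of_maps_to (t := (children_finite hlf o x).toFinset)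
    (g := parFn T o)]
  swap
  · intro w hw
    rw [Finset.mem_filter] at hw
    have := (key w hw.1).2
    rw [hw.2] at this
    simpa using this
  calc _ ≤ ∑ c ∈ (children_finite hlf o x).toFinset, (m : ℝ) ^ (1 - p) * ‖kerFn T o x‖ ^ p := by
        apply Finset.sum_le_sum
        intro c hc
        have hc : c ∈ children T o x := by simpa using hc
        have hcm : m ≤ br T o c := (hN c (by rw [hc.2]; omega)).1
        have hb0 : (0 : ℝ) < br T o c := by exact_mod_cast (by omega : 0 < br T o c)
        have hm0 : (0 : ℝ) < m := by exact_mod_cast (by omega : 0 < m)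
        have hval : ∀ w ∈ (s.filter (fun w => parFn T o (parFn T o w) = x)).filter
            (fun w => parFn T o w = c), ‖kerFn T o w‖ ^ p =
              (br T o c : ℝ) ^ (-p) * ‖kerFn T o x‖ ^ p := by
          intro w hw
          simp only [Finset.mem_filter] at hw
          have hw1 := (key w hw.1.1).1
          rw [hw.2] at hw1
          rw [kerFn_grand htree hc hw1, norm_div, norm_neg, Complex.norm_natCast,
            Real.div_rpow (norm_nonneg _) hb0.le, Real.rpow_neg hb0.le, div_eq_inv_mul]
        rw [Finset.sum_congr rfl hval, Finset.sum_const, nsmul_eq_mul, ← mul_assoc]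
        apply mul_le_mul_of_nonneg_right _ (by positivity)
        have hcard : ((s.filter (fun w => parFn T o (parFn T o w) = x)).filter
            (fun w => parFn T o w = c)).card ≤ br T o c := by
          rw [br, Set.ncard_eq_toFinset_card _ (children_finite hlf o c)]
          apply Finset.card_le_card
          intro w hw
          simp only [Finset.mem_filter] at hw
          have hw1 := (key w hw.1.1).1
          rw [hw.2] at hw1
          simpa using hw1
        calc _ ≤ (br T o c : ℝ) * (br T o c : ℝ) ^ (-p) := by
              apply mul_le_mul_of_nonneg_right _ (by positivity)
              exact_mod_cast hcard
          _ = (br T o c : ℝ) ^ (1 - p) := by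
              rw [sub_eq_add_neg, Real.rpow_add hb0, Real.rpow_one]
          _ ≤ (m : ℝ) ^ (1 - p) :=
              Real.rpow_le_rpow_of_nonpos hm0 (by exact_mod_cast hcm) (by linarith)
    _ = (br T o x : ℝ) * ((m : ℝ) ^ (1 - p) * ‖kerFn T o x‖ ^ p) := by
        rw [Finset.sum_const, ← Set.ncard_eq_toFinset_card _ (children_finite hlf o x),
          nsmul_eq_mul, br]
    _ ≤ M * ((m : ℝ) ^ (1 - p) * ‖kerFn T o x‖ ^ p) := by
        apply mul_le_mul_of_nonneg_right _ (by positivity)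
        exact_mod_cast (hN x hxN).2
    _ = _ := by ring

open Classical in
lemma kerFn_summable {V : Type*} {T : SimpleGraph V} (htree : T.IsTree)
    (hlf : ∀ v, (T.neighborSet v).Finite) (o : V)
    (M m : ℕ) (N : ℕ) (hm1 : 1 < m)
    (hN : ∀ v, N ≤ T.dist o v → m ≤ br T o v ∧ br T o v ≤ M) (p : ℝ) (hp : 1 ≤ p)
    (hr : M * (m : ℝ) ^ (1 - p) < 1) : memlp (kerFn T o) p := by
  set r : ℝ := M * (m : ℝ) ^ (1 - p) with hrdef
  have hr0 : 0 ≤ r := by positivity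
  set B := (ball_finite htree hlf o (N + 1)).toFinset with hB
  set C : ℝ := ∑ w ∈ B, ‖kerFn T o w‖ ^ p with hC
  have hC0 : 0 ≤ C := Finset.sum_nonneg fun _ _ => by positivity
  have main : ∀ n : ℕ, ∀ s : Finset V, (∀ w ∈ s, T.dist o w ≤ n) →
      ∑ w ∈ s, ‖kerFn T o w‖ ^ p ≤ C / (1 - r) := by
    have hK : C + r * (C / (1 - r)) = C / (1 - r) := by
      have : 1 - r ≠ 0 := by linarith
      field_simp
      ring
    have hK0 : 0 ≤ C / (1 - r) := div_nonneg hC0 (by linarith)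
    intro n
    induction n using Nat.strong_induction_on with
    | _ n ih =>
      intro s hs
      rw [← Finset.sum_filter_add_sum_filter_not s (fun w => T.dist o w ≤ N + 1), ← hK]
      apply add_le_add
      · apply Finset.sum_le_sum_of_subset_of_nonneg
        · intro w hw
          simpa [hB] using (Finset.mem_filter.1 hw).2
        · intros; positivity
      · refine (step_bound htree hlf o M m N hm1 hN p hp _ ?_).trans ?_
        · intro w hw
          have := (Finset.mem_filter.1 hw).2
          omega
        · rw [← hrdef]
          apply mul_le_mul_of_nonneg_left _ hr0
          rcases Nat.eq_zero_or_pos n with h0 | h0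
          · rw [Finset.sum_eq_zero]
            · exact hK0
            · intro x hx
              obtain ⟨w, hw, -⟩ := Finset.mem_image.1 hx
              have hw := Finset.mem_filter.1 hw
              have := hs w hw.1
              omega
          · apply ih (n - 1) (by omega)
            intro x hx
            obtain ⟨w, hw, rfl⟩ := Finset.mem_image.1 hx
            have hw := Finset.mem_filter.1 hw
            have h1 := hs w hw.1
            have h2 := mem_children_parFn htree (o := o) (v := w) (by omega)
            have h3 := h2.2
            have h4 := (mem_children_parFn htree (o := o) (v := parFn T o w) (by omega)).2
            omega
  apply summable_of_sum_le (c := C / (1 - r))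
  · intro v
    positivity
  · intro s
    exact main (s.sup (T.dist o)) s fun w hw => Finset.le_sup (f := T.dist o) hw

/-- Let `T` be a leafless rooted tree of bounded degree with essential
maximum and minimum branching numbers `M` and `m`. If `m > 1` and `log_m(M) + 1 < p < ∞`,
then the kernel of the shift on `ℓ^p(T)` is nontrivial; moreover (for any `m ≥ 1`), the
kernel of the shift on `ℓ^∞(T)` is nontrivial. -/
theorem stmt9 (V : Type*) [Countable V] [Infinite V] (T : SimpleGraph V)
    (htree : T.IsTree) (hlf : ∀ v, (T.neighborSet v).Finite)
    (o : V) (hbdd : ∃ D : ℕ, ∀ v, gdeg T v ≤ D)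
    (hleafless : ∀ v, (children T o v).Nonempty)
    (M m : ℕ)
    (hM : IsGreatest (br T o '' essSet T o) M)
    (hm : IsLeast (br T o '' essSet T o) m) :
    (∀ p : ℝ, 1 < m → Real.logb m M + 1 < p →
      ∃ f : V → ℂ, f ≠ 0 ∧ memlp f p ∧ ∀ u, shiftOp T f u = 0) ∧
    (∃ f : V → ℂ, f ≠ 0 ∧ (∃ B : ℝ, ∀ v, ‖f v‖ ≤ B) ∧ ∀ u, shiftOp T f u = 0) := by
  have hne : kerFn T o ≠ 0 := by
    intro h
    have := congrFun h o
    simp [kerFn, kerLvl] at this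
  refine ⟨fun p hm1 hp => ⟨kerFn T o, hne, ?_, kerFn_shift htree hlf o hleafless⟩,
    ⟨kerFn T o, hne, ⟨1, fun v => kerLvl_bdd hlf o hleafless _ v⟩,
      kerFn_shift htree hlf o hleafless⟩⟩
  obtain ⟨N, hN⟩ := exists_level hlf o hbdd M m hM hm
  have hmM : m ≤ M := hm.2 hM.1
  have hm1' : (1 : ℝ) < m := by exact_mod_cast hm1
  have hM1 : (1 : ℝ) < M := by exact_mod_cast (by omega : 1 < M)
  have hlog : 0 ≤ Real.logb m M := Real.logb_nonneg hm1' hM1.le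
  refine kerFn_summable htree hlf o M m N hm1 hN p (by linarith) ?_
  have h1 : (M : ℝ) = (m : ℝ) ^ Real.logb m M :=
    (Real.rpow_logb (by linarith) hm1'.ne' (by linarith)).symm
  rw [h1, ← Real.rpow_add (by linarith)]
  exact Real.rpow_lt_one_of_one_lt_of_neg hm1' (by linarith)
end

section
/- Let G be the infinite comb and let 1 ≤ p < ∞. The shift operator S is a bounded operator on the complex Banach space ℓ^p(G), and its spectrum is σ(S) = [−1−√2, 1−√2] ∪ [−1+√2, 1+√2]. -/
open scoped ENNReal

/-- Base relation for the infinite comb: `Sum.inl j` is the spine vertex `v_j` and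
`Sum.inr j` is the tooth vertex `w_j`; edges are `v_j ~ v_{j+1}` and `v_j ~ w_j`. -/
def icombRel : (ℕ ⊕ ℕ) → (ℕ ⊕ ℕ) → Prop
  | Sum.inl j, Sum.inl k => k = j + 1
  | Sum.inl j, Sum.inr k => j = k
  | _, _ => False

/-- The infinite comb. -/
def icomb : SimpleGraph (ℕ ⊕ ℕ) :=
  SimpleGraph.fromRel icombRel


lemma comb_partial (p : ℝ≥0∞) [Fact (1 ≤ p)] (hp : p ≠ ⊤) (D : ℕ ⊕ ℕ → Prop)
    [DecidablePred D] (σ : ℕ ⊕ ℕ → ℕ ⊕ ℕ) (hσ : ∀ x y, D x → D y → σ x = σ y → x = y) :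
    ∃ T : lp (fun _ : ℕ ⊕ ℕ => ℂ) p →L[ℂ] lp (fun _ : ℕ ⊕ ℕ => ℂ) p,
      (∀ f x, (T f) x = if D x then f (σ x) else 0) ∧ ‖T‖ ≤ 1 := by
  have h1 : 1 ≤ p := Fact.out
  have hp0 : 0 < p.toReal := ENNReal.toReal_pos (by positivity) hp
  have key : ∀ (f : lp (fun _ : ℕ ⊕ ℕ => ℂ) p) (s : Finset (ℕ ⊕ ℕ)),
      ∑ x ∈ s, ‖(if D x then f (σ x) else 0 : ℂ)‖ ^ p.toReal ≤ ‖f‖ ^ p.toReal := by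
    intro f s
    have : ∑ x ∈ s, ‖(if D x then f (σ x) else 0 : ℂ)‖ ^ p.toReal
        = ∑ y ∈ (s.filter D).image σ, ‖f y‖ ^ p.toReal := by
      rw [Finset.sum_image, Finset.sum_filter]
      · refine Finset.sum_congr rfl fun x _ => ?_
        split_ifs
        · rfl
        · simp [Real.zero_rpow hp0.ne']
      · intro x hx y hy h
        simp at hx hy
        exact hσ x y hx.2 hy.2 h
    rw [this]
    exact lp.sum_rpow_le_norm_rpow hp0 f _
  let T0 : lp (fun _ : ℕ ⊕ ℕ => ℂ) p →ₗ[ℂ] lp (fun _ : ℕ ⊕ ℕ => ℂ) p :=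
    { toFun := fun f => ⟨fun x => if D x then f (σ x) else 0, memℓp_gen' (key f)⟩
      map_add' := by
        intro f g
        ext x
        change (if D x then f (σ x) + g (σ x) else 0 : ℂ) =
          (if D x then f (σ x) else 0) + (if D x then g (σ x) else 0)
        by_cases h : D x <;> simp [h]
      map_smul' := by
        intro c f
        ext x
        by_cases h : D x <;> simp [h] }
  have hb : ∀ f, ‖T0 f‖ ≤ 1 * ‖f‖ := by
    intro f
    rw [one_mul]
    exact lp.norm_le_of_forall_sum_le hp0 (norm_nonneg _) (key f)
  exact ⟨T0.mkContinuous 1 hb, fun f x => rfl, T0.mkContinuous_norm_le zero_le_one hb⟩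

lemma icomb_inl_zero (f : ℕ ⊕ ℕ → ℂ) :
    shiftOp icomb f (Sum.inl 0) = f (Sum.inl 1) + f (Sum.inr 0) := by
  have : icomb.neighborSet (Sum.inl 0) = ↑({Sum.inl 1, Sum.inr 0} : Finset (ℕ ⊕ ℕ)) := by
    ext x
    rcases x with x | x <;> simp [icomb, icombRel] <;> omega
  rw [shiftOp, this, finsum_mem_coe_finset, Finset.sum_pair (by simp)]

lemma icomb_inl_succ (f : ℕ ⊕ ℕ → ℂ) (j : ℕ) :
    shiftOp icomb f (Sum.inl (j + 1)) =
      f (Sum.inl j) + (f (Sum.inl (j + 2)) + f (Sum.inr (j + 1))) := by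
  have : icomb.neighborSet (Sum.inl (j + 1)) =
      ↑({Sum.inl j, Sum.inl (j + 2), Sum.inr (j + 1)} : Finset (ℕ ⊕ ℕ)) := by
    ext x
    rcases x with x | x <;> simp [icomb, icombRel] <;> omega
  rw [shiftOp, this, finsum_mem_coe_finset, Finset.sum_insert (by simp),
    Finset.sum_pair (by simp)]

lemma icomb_inr (f : ℕ ⊕ ℕ → ℂ) (j : ℕ) :
    shiftOp icomb f (Sum.inr j) = f (Sum.inl j) := by
  have : icomb.neighborSet (Sum.inr j) = ↑({Sum.inl j} : Finset (ℕ ⊕ ℕ)) := by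
    ext x
    rcases x with x | x <;> simp [icomb, icombRel]
  rw [shiftOp, this, finsum_mem_coe_finset, Finset.sum_singleton]

lemma mem_bands (t : ℝ) : t ∈ (Set.Icc (-1 - Real.sqrt 2) (1 - Real.sqrt 2) ∪
    Set.Icc (-1 + Real.sqrt 2) (1 + Real.sqrt 2)) ↔ (t ^ 2 - 1) ^ 2 ≤ 4 * t ^ 2 := by
  have h2 : Real.sqrt 2 ^ 2 = 2 := Real.sq_sqrt (by norm_num)
  have h1 : 1 < Real.sqrt 2 := by
    rw [Real.lt_sqrt] <;> norm_num
  generalize Real.sqrt 2 = r at *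
  have e : (t ^ 2 - 1) ^ 2 - 4 * t ^ 2 = ((t + 1 + r) * (t - 1 + r)) * ((t + 1 - r) * (t - 1 - r)) := by
    have h4 : r ^ 4 = 4 := by rw [show r ^ 4 = (r ^ 2) ^ 2 by ring, h2]; norm_num
    ring_nf
    rw [h4, h2]; ring
  rw [← sub_nonpos, e]
  simp only [Set.mem_union, Set.mem_Icc]
  constructor
  · rintro (⟨ha, hb⟩ | ⟨ha, hb⟩)
    · apply mul_nonpos_of_nonpos_of_nonneg
      · apply mul_nonpos_of_nonneg_of_nonpos <;> linarith
      · apply mul_nonneg_of_nonpos_of_nonpos <;> linarith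
    · apply mul_nonpos_of_nonneg_of_nonpos
      · apply mul_nonneg <;> linarith
      · apply mul_nonpos_of_nonneg_of_nonpos <;> linarith
  · intro h
    by_contra hc
    push Not at hc
    obtain ⟨hA, hB⟩ := hc
    apply h.not_gt
    by_cases c1 : t < -1 - r
    · apply mul_pos
      · apply mul_pos_of_neg_of_neg <;> linarith
      · apply mul_pos_of_neg_of_neg <;> linarith
    · have c2 := hA (not_lt.mp c1)
      by_cases c3 : t < -1 + r
      · apply mul_pos
        · apply mul_pos <;> linarith
        · apply mul_pos_of_neg_of_neg <;> linarith
      · have c4 := hB (not_lt.mp c3)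
        apply mul_pos <;> apply mul_pos <;> linarith

/-- On the bands the quadratic has a root of modulus one. -/
lemma band_root (t : ℝ) (h : (t ^ 2 - 1) ^ 2 ≤ 4 * t ^ 2) :
    ∃ z : ℂ, ‖z‖ = 1 ∧ (t : ℂ) * (1 + z ^ 2) = ((t : ℂ) ^ 2 - 1) * z := by
  have ht : t ≠ 0 := by
    rintro rfl
    norm_num at h
  set c := (t ^ 2 - 1) / (2 * t) with hc
  have hct : 2 * t * c = t ^ 2 - 1 := by rw [hc]; field_simp
  have hc1 : 0 ≤ 1 - c ^ 2 := by
    have : c ^ 2 ≤ 1 := by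
      rw [hc, div_pow, div_le_one (by positivity)]
      linarith
    linarith
  have hs := Real.sq_sqrt hc1
  refine ⟨⟨c, Real.sqrt (1 - c ^ 2)⟩, ?_, ?_⟩
  · rw [Complex.norm_def, Complex.normSq_mk, Real.sqrt_eq_one]
    linarith
  · generalize Real.sqrt (1 - c ^ 2) = s at *
    apply Complex.ext
    · simp [pow_two]
      linear_combination (-t) * hs + (-c) * (-hct)
    · simp [pow_two]
      linear_combination s * hct

/-- Off the bands there is a factorization with a root of modulus less than one. -/
lemma off_band_root (l : ℂ) (h : ∀ t : ℝ, (t : ℂ) = l → ¬ (t ^ 2 - 1) ^ 2 ≤ 4 * t ^ 2) :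
    ∃ z c : ℂ, ‖z‖ < 1 ∧ c ≠ 0 ∧ l ^ 2 - 1 = c * (1 + z ^ 2) ∧ l = c * z := by
  by_cases hl : l = 0
  · exact ⟨0, -1, by simp, by simp, by simp [hl], by simp [hl]⟩
  set m : ℂ := (l ^ 2 - 1) / l with hm
  have hml : m * l = l ^ 2 - 1 := by rw [hm]; field_simp
  obtain ⟨s, hs⟩ := IsAlgClosed.exists_pow_nat_eq (m ^ 2 - 4) (n := 2) (by norm_num)
  have main : ∀ z w : ℂ, z * w = 1 → z + w = m → ‖z‖ < 1 →
      ∃ z c : ℂ, ‖z‖ < 1 ∧ c ≠ 0 ∧ l ^ 2 - 1 = c * (1 + z ^ 2) ∧ l = c * z := by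
    intro z w hzw hz hn
    have hw : w ≠ 0 := right_ne_zero_of_mul_eq_one hzw
    refine ⟨z, l * w, hn, mul_ne_zero hl hw, ?_, ?_⟩
    · linear_combination -hml - l * hz - l * z * hzw
    · linear_combination - l * hzw
  have hzw : ((m + s) / 2) * ((m - s) / 2) = 1 := by linear_combination -hs / 4
  have hzs : ((m + s) / 2) + ((m - s) / 2) = m := by ring
  generalize (m + s) / 2 = z at *
  generalize (m - s) / 2 = w at *
  have hnn : ‖z‖ * ‖w‖ = 1 := by rw [← norm_mul, hzw, norm_one]
  rcases lt_trichotomy ‖z‖ 1 with h1 | h1 | h1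
  · exact main z w hzw hzs h1
  · exfalso
    have hwz : w = (starRingEnd ℂ) z := by
      have : z * (starRingEnd ℂ) z = 1 := by
        rw [Complex.mul_conj, Complex.normSq_eq_norm_sq, h1]; simp
      have hz0 : z ≠ 0 := left_ne_zero_of_mul_eq_one hzw
      exact mul_left_cancel₀ hz0 (hzw.trans this.symm)
    have hre : m = ((2 * z.re : ℝ) : ℂ) := by
      rw [← hzs, hwz, Complex.add_conj]
    have hzre : z.re ^ 2 ≤ 1 := by
      have := Complex.abs_re_le_norm z
      rw [h1] at this
      exact (sq_le_one_iff_abs_le_one _).mpr this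
    set c := z.re
    have hq := Real.sq_sqrt (show 0 ≤ c ^ 2 + 1 by positivity)
    set q := Real.sqrt (c ^ 2 + 1)
    have hqC : (q : ℂ) ^ 2 = (c : ℂ) ^ 2 + 1 := by exact_mod_cast hq
    have hfac : (l - ((c + q : ℝ) : ℂ)) * (l - ((c - q : ℝ) : ℂ)) = 0 := by
      rw [hre] at hml
      push_cast at hml ⊢
      linear_combination -hml - hqC
    have fin : ∀ t : ℝ, t ^ 2 - 1 = 2 * c * t → (t ^ 2 - 1) ^ 2 ≤ 4 * t ^ 2 := by
      intro t ht
      rw [ht]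
      nlinarith [mul_nonneg (sub_nonneg.mpr hzre) (sq_nonneg t)]
    rcases mul_eq_zero.mp hfac with h0 | h0
    · exact h _ (sub_eq_zero.mp h0).symm (fin _ (by linear_combination hq))
    · exact h _ (sub_eq_zero.mp h0).symm (fin _ (by linear_combination hq))
  · refine main w z (by rw [mul_comm]; exact hzw) (by rw [add_comm]; exact hzs) ?_
    by_contra hc
    push Not at hc
    nlinarith

lemma isUnit_of_two_sided {R : Type*} [Ring R] (a b u : R) (hu : IsUnit u) (h1 : a * b = u)
    (h2 : b * a = u) : IsUnit a := by
  obtain ⟨v, rfl⟩ := hu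
  rw [isUnit_iff_exists_and_exists]
  refine ⟨⟨b * ↑v⁻¹, by rw [← mul_assoc, h1]; simp⟩, ⟨↑v⁻¹ * b, by rw [mul_assoc, h2]; simp⟩⟩

set_option maxHeartbeats 1000000 in
/-- For `1 ≤ p < ∞`, the shift is a bounded operator on
`ℓ^p` of the infinite comb, and its spectrum is
`[−1−√2, 1−√2] ∪ [−1+√2, 1+√2]`. -/
theorem stmt18 (p : ℝ≥0∞) [Fact (1 ≤ p)] (hp : p ≠ ⊤) :
    ∃ S : lp (fun _ : ℕ ⊕ ℕ => ℂ) p →L[ℂ] lp (fun _ : ℕ ⊕ ℕ => ℂ) p,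
      (∀ (f : lp (fun _ : ℕ ⊕ ℕ => ℂ) p) (x : ℕ ⊕ ℕ),
        (S f) x = shiftOp icomb (fun y => f y) x) ∧
      spectrum ℂ S = (fun t : ℝ => (t : ℂ)) ''
        (Set.Icc (-1 - Real.sqrt 2) (1 - Real.sqrt 2) ∪
          Set.Icc (-1 + Real.sqrt 2) (1 + Real.sqrt 2)) := by
  have h1 : 1 ≤ p := Fact.out
  have hp0 : 0 < p.toReal := ENNReal.toReal_pos (by positivity) hp
  obtain ⟨A, hA, -⟩ := comb_partial p hp (fun _ => True) Sum.swap
    (fun x y _ _ h => Sum.swap_leftInverse.injective h)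
  obtain ⟨Q, hQ, -⟩ := comb_partial p hp (fun x => x.isLeft = true) id (fun x y _ _ h => h)
  obtain ⟨L, hL, hLn⟩ := comb_partial p hp (fun _ => True) (Sum.map (· + 1) (· + 1))
    (by rintro (x | x) (y | y) <;> simp)
  obtain ⟨R, hR, hRn⟩ := comb_partial p hp (fun x => x ≠ Sum.inl 0 ∧ x ≠ Sum.inr 0)
    (Sum.map (· - 1) (· - 1)) (by rintro (x | x) (y | y) <;> simp <;> omega)
  have hAl : ∀ f j, (A f) (Sum.inl j) = f (Sum.inr j) := fun f j => by simp [hA]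
  have hAr : ∀ f j, (A f) (Sum.inr j) = f (Sum.inl j) := fun f j => by simp [hA]
  have hQl : ∀ f j, (Q f) (Sum.inl j) = f (Sum.inl j) := fun f j => by simp [hQ]
  have hQr : ∀ f j, (Q f) (Sum.inr j) = 0 := fun f j => by simp [hQ]
  have hLl : ∀ f j, (L f) (Sum.inl j) = f (Sum.inl (j + 1)) := fun f j => by simp [hL]
  have hLr : ∀ f j, (L f) (Sum.inr j) = f (Sum.inr (j + 1)) := fun f j => by simp [hL]
  have hRl0 : ∀ f, (R f) (Sum.inl 0) = 0 := fun f => by simp [hR]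
  have hRr0 : ∀ f, (R f) (Sum.inr 0) = 0 := fun f => by simp [hR]
  have hRl : ∀ f j, (R f) (Sum.inl (j + 1)) = f (Sum.inl j) := fun f j => by simp [hR]
  have hRr : ∀ f j, (R f) (Sum.inr (j + 1)) = f (Sum.inr j) := fun f j => by simp [hR]
  clear hA hQ hL hR
  have hS : ∀ (f : lp (fun _ : ℕ ⊕ ℕ => ℂ) p) (x : ℕ ⊕ ℕ),
      ((A + Q * (L + R)) f) x = shiftOp icomb (fun y => f y) x := by
    rintro f ((_ | j) | j)
    · simp [icomb_inl_zero, hAl, hQl, hLl, hRl0]; ring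
    · simp [icomb_inl_succ, hAl, hQl, hLl, hRl]; ring
    · simp [icomb_inr, hAr, hQr]
  refine ⟨A + Q * (L + R), hS, ?_⟩
  ext l
  rw [spectrum.mem_iff]
  constructor
  · intro hl
    by_contra hc
    apply hl
    obtain ⟨z, c, hz, hc0, hlc, hlz⟩ := off_band_root l (fun t ht hb =>
      hc ⟨t, (mem_bands t).mpr hb, ht⟩)
    have hsm : ∀ B : lp (fun _ : ℕ ⊕ ℕ => ℂ) p →L[ℂ] lp (fun _ : ℕ ⊕ ℕ => ℂ) p,
        ‖B‖ ≤ 1 → IsUnit (1 - z • B) := by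
      intro B hB
      apply isUnit_one_sub_of_norm_lt_one
      calc ‖z • B‖ = ‖z‖ * ‖B‖ := norm_smul _ _
        _ ≤ ‖z‖ * 1 := by gcongr
        _ < 1 := by linarith
    have hu : IsUnit (algebraMap ℂ (lp (fun _ : ℕ ⊕ ℕ => ℂ) p →L[ℂ] lp (fun _ : ℕ ⊕ ℕ => ℂ) p) c
        * ((1 - z • L) * (1 - z • R))) :=
      ((isUnit_iff_ne_zero.mpr hc0).map _).mul ((hsm L hLn).mul (hsm R hRn))
    have ev_mul : ∀ (B C : lp (fun _ : ℕ ⊕ ℕ => ℂ) p →L[ℂ] lp (fun _ : ℕ ⊕ ℕ => ℂ) p) f,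
        (B * C) f = B (C f) := fun B C f => rfl
    have ev_sub : ∀ (B C : lp (fun _ : ℕ ⊕ ℕ => ℂ) p →L[ℂ] lp (fun _ : ℕ ⊕ ℕ => ℂ) p) f x,
        ((B - C) f) x = (B f) x - (C f) x := fun B C f x => rfl
    have ev_add : ∀ (B C : lp (fun _ : ℕ ⊕ ℕ => ℂ) p →L[ℂ] lp (fun _ : ℕ ⊕ ℕ => ℂ) p) f x,
        ((B + C) f) x = (B f) x + (C f) x := fun B C f x => rfl
    have ev_smul : ∀ (k : ℂ) (B : lp (fun _ : ℕ ⊕ ℕ => ℂ) p →L[ℂ] lp (fun _ : ℕ ⊕ ℕ => ℂ) p) f x,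
        ((k • B) f) x = k * (B f) x := fun k B f x => rfl
    have ev_one : ∀ f : lp (fun _ : ℕ ⊕ ℕ => ℂ) p,
        (1 : lp (fun _ : ℕ ⊕ ℕ => ℂ) p →L[ℂ] lp (fun _ : ℕ ⊕ ℕ => ℂ) p) f = f := fun f => rfl
    refine isUnit_of_two_sided _ (l • Q + A - (L + R - algebraMap ℂ _ l) * (1 - Q)) _ hu ?_ ?_
    · refine ContinuousLinearMap.ext fun f => lp.ext (funext fun x => ?_)
      rcases x with (_ | j) | (_ | j) <;>
      simp only [Algebra.algebraMap_eq_smul_one, ev_mul, ev_sub, ev_add, ev_smul, ev_one,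
        hAl, hAr, hQl, hQr, hLl, hLr, hRl, hRr, hRl0, hRr0]
      · linear_combination f (Sum.inl 0) * hlc - f (Sum.inl 1) * hlz
      · have hR0 : (R ((1 - Q) f)) (Sum.inl j) = 0 := by
          cases j <;> simp only [ev_sub, ev_one, hRl0, hRl, hQl, sub_self]
        linear_combination f (Sum.inl (j + 1)) * hlc - (f (Sum.inl j) + f (Sum.inl (j + 2))) * hlz + hR0
      · linear_combination f (Sum.inr 0) * hlc - f (Sum.inr 1) * hlz
      · linear_combination f (Sum.inr (j + 1)) * hlc - (f (Sum.inr j) + f (Sum.inr (j + 2))) * hlz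
    · refine ContinuousLinearMap.ext fun f => lp.ext (funext fun x => ?_)
      rcases x with (_ | j) | (_ | j) <;>
      simp only [Algebra.algebraMap_eq_smul_one, ev_mul, ev_sub, ev_add, ev_smul, ev_one,
        hAl, hAr, hQl, hQr, hLl, hLr, hRl, hRr, hRl0, hRr0]
      · linear_combination f (Sum.inl 0) * hlc - f (Sum.inl 1) * hlz
      · linear_combination f (Sum.inl (j + 1)) * hlc - (f (Sum.inl j) + f (Sum.inl (j + 2))) * hlz
      · linear_combination f (Sum.inr 0) * hlc - f (Sum.inr 1) * hlz
      · linear_combination f (Sum.inr (j + 1)) * hlc - (f (Sum.inr j) + f (Sum.inr (j + 2))) * hlz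
  · rintro ⟨t, ht, rfl⟩ hunit
    rw [mem_bands] at ht
    obtain ⟨z, hz, hzt⟩ := band_root t ht
    have ht0 : (t : ℂ) ≠ 0 := by
      intro h
      have : t = 0 := by exact_mod_cast h
      subst this
      norm_num at ht
    have hz0 : z ≠ 0 := by
      rintro rfl
      simp at hz
    obtain ⟨u, hu⟩ := hunit
    set e : lp (fun _ : ℕ ⊕ ℕ => ℂ) p := lp.single p (Sum.inl 0) (1 : ℂ) with he
    have hf : ((algebraMap ℂ (lp (fun _ : ℕ ⊕ ℕ => ℂ) p →L[ℂ] lp (fun _ : ℕ ⊕ ℕ => ℂ) p) t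
        - (A + Q * (L + R))) * ↑u⁻¹) e = e := by
      rw [← hu]; simp
    rw [mul_apply_eq_comp] at hf
    generalize (↑u⁻¹ : lp (fun _ : ℕ ⊕ ℕ => ℂ) p →L[ℂ] lp (fun _ : ℕ ⊕ ℕ => ℂ) p) e = f at hf
    have hx : ∀ x, t * f x - shiftOp icomb (fun y => f y) x = e x := by
      intro x
      rw [← hS, ← hf]
      rfl
    have e0 : e (Sum.inl 0) = 1 := by simp [he]
    have e1 : ∀ j, e (Sum.inl (j + 1)) = 0 := fun j => by simp [he]
    have e2 : ∀ j, e (Sum.inr j) = 0 := fun j => by simp [he]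
    have q0 := hx (Sum.inl 0)
    rw [icomb_inl_zero, e0] at q0
    have q1 : ∀ j, _ := fun j => hx (Sum.inl (j + 1))
    simp only [icomb_inl_succ, e1] at q1
    have q2 : ∀ j, _ := fun j => hx (Sum.inr j)
    simp only [icomb_inr, e2] at q2
    have hlim : Filter.Tendsto (fun j => ‖f (Sum.inl j)‖) Filter.atTop (nhds 0) := by
      have hsum : Summable fun x => ‖f x‖ ^ p.toReal := (lp.memℓp f).summable hp0
      have hsum2 : Summable fun j : ℕ => ‖f (Sum.inl j)‖ ^ p.toReal :=
        hsum.comp_injective Sum.inl_injective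
      have h3 := hsum2.tendsto_atTop_zero.rpow_const (p := p.toReal⁻¹)
        (Or.inr (by positivity))
      rw [Real.zero_rpow (by positivity)] at h3
      refine h3.congr fun j => ?_
      exact Real.rpow_rpow_inv (norm_nonneg _) hp0.ne'
    have hlim2 : Filter.Tendsto (fun j => ‖f (Sum.inl j)‖) Filter.atTop (nhds 0) := hlim
    set a : ℕ → ℂ := fun j => f (Sum.inl j) with ha
    set b : ℕ → ℂ := fun j => f (Sum.inr j) with hb
    have q0' : t * a 0 - (a 1 + b 0) = 1 := q0
    have q1' : ∀ j, t * a (j + 1) - (a j + (a (j + 2) + b (j + 1))) = 0 := q1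
    have q2' : ∀ j, t * b j - a j = 0 := q2
    have hlima : Filter.Tendsto a Filter.atTop (nhds 0) :=
      tendsto_zero_iff_norm_tendsto_zero.mpr hlim
    have hg : ∀ j, z * (a (j + 2) - z * a (j + 1)) = a (j + 1) - z * a j := by
      intro j
      apply mul_left_cancel₀ ht0
      linear_combination (-t * z) * q1' j - z * q2' (j + 1) - a (j + 1) * hzt
    have hconst : ∀ (g : ℕ → ℂ), Filter.Tendsto g Filter.atTop (nhds 0) →
        (∀ j, ‖g (j + 1)‖ = ‖g j‖) → ∀ j, g j = 0 := by
      intro g hg0 hgs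
      have hall : ∀ j, ‖g j‖ = ‖g 0‖ := by
        intro j
        induction j with
        | zero => rfl
        | succ k ih => rw [hgs, ih]
      have h5 : Filter.Tendsto (fun j => ‖g j‖) Filter.atTop (nhds 0) :=
        tendsto_zero_iff_norm_tendsto_zero.mp hg0
      have h6 : ‖g 0‖ = 0 := by
        refine tendsto_nhds_unique ?_ h5
        simp only [hall]
        exact tendsto_const_nhds
      intro j
      rw [← norm_eq_zero, hall, h6]
    have hG : ∀ j, a (j + 1) - z * a j = 0 := by
      apply hconst (fun j => a (j + 1) - z * a j)
      · have := ((Filter.tendsto_add_atTop_iff_nat 1).mpr hlima).sub (hlima.const_mul z)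
        simpa using this
      · intro j
        change ‖a (j + 2) - z * a (j + 1)‖ = ‖a (j + 1) - z * a j‖
        rw [← hg j, norm_mul, hz, one_mul]
    have hzero : ∀ j, a j = 0 := by
      apply hconst a hlima
      intro j
      rw [sub_eq_zero.mp (hG j), norm_mul, hz, one_mul]
    have hb0 : b 0 = 0 := by
      have := q2' 0
      rw [hzero 0, sub_zero] at this
      exact (mul_eq_zero.mp this).resolve_left ht0
    rw [hzero 0, hzero 1, hb0] at q0'
    simp at q0'
end

section
/- Let H be a finite connected graph with vertices v_0, v_1, …, v_n, and let G_H be the graph obtained from H by attaching an infinite tail at v_0: adjoin new vertices u_1, u_2, … with u_k ~ u_{k+1} for all k ≥ 1 and v_0 ~ u_1. For every 1 ≤ p < ∞, the shift operator S is a bounded operator on ℓ^p(G_H), and its spectrum equals the union of the interval [−2, 2] with the set of eigenvalues of S: σ(S) = [−2,2] ∪ {λ ∈ ℂ : there exists a nonzero f ∈ ℓ^p(G_H) with Sf = λf}. -/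
open scoped ENNReal

/-- Base relation for a finite graph `H` on `v_0, …, v_n` (`Sum.inl`) with an infinite
tail `u_1, u_2, …` (`Sum.inr k` is `u_{k+1}`) attached at `v_0`. -/
def tailedRel (n : ℕ) (H : SimpleGraph (Fin (n + 1))) :
    (Fin (n + 1) ⊕ ℕ) → (Fin (n + 1) ⊕ ℕ) → Prop
  | Sum.inl i, Sum.inl j => H.Adj i j
  | Sum.inl i, Sum.inr k => (i : ℕ) = 0 ∧ k = 0
  | Sum.inr k, Sum.inr l => l = k + 1
  | _, _ => False

/-- The graph `G_H`: `H` with an infinite tail attached at `v_0`. -/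
def tailed (n : ℕ) (H : SimpleGraph (Fin (n + 1))) : SimpleGraph (Fin (n + 1) ⊕ ℕ) :=
  SimpleGraph.fromRel (tailedRel n H)

section Abstract

variable {X : Type*} [NormedAddCommGroup X] [NormedSpace ℂ X] [CompleteSpace X]

theorem isUnit_one_sub_smul (L : X →L[ℂ] X) (hL : ‖L‖ ≤ 1) (z : ℂ) (hz : ‖z‖ < 1) :
    IsUnit (1 - z • L) := by
  apply isUnit_one_sub_of_norm_lt_one
  calc ‖z • L‖ = ‖z‖ * ‖L‖ := norm_smul _ _
    _ ≤ ‖z‖ * 1 := by gcongr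
    _ < 1 := by simpa using hz

theorem fredholm_aux (L R F P : X →L[ℂ] X) (hL : ‖L‖ ≤ 1) (hR : ‖R‖ ≤ 1)
    (hLR : L * R = 1 - P) (hF : IsCompactOperator F) (hP : IsCompactOperator P)
    (z l : ℂ) (hz0 : z ≠ 0) (hz : ‖z‖ < 1) (hl : l = z + z⁻¹)
    (hinj : ∀ f : X, (L + R + F) f = l • f → f = 0) :
    l ∉ spectrum ℂ (L + R + F) := by
  obtain ⟨A, hA⟩ := isUnit_one_sub_smul L hL z hz
  obtain ⟨B, hB⟩ := isUnit_one_sub_smul R hR z hz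
  set Q := A * B with hQ
  have hQv : (Q : X →L[ℂ] X) = 1 - z • (L + R) + z ^ 2 • (1 - P) := by
    rw [← hLR, hQ, Units.val_mul, hA, hB, mul_sub, sub_mul, sub_mul]
    simp only [mul_one, one_mul, smul_mul_smul_comm, smul_add, ← pow_two z]
    abel
  have key : algebraMap ℂ (X →L[ℂ] X) l - (L + R + F)
      = z⁻¹ • ((Q : X →L[ℂ] X) * (1 - (↑Q⁻¹ : X →L[ℂ] X) * (z • F - z ^ 2 • P))) := by
    rw [mul_sub, ← mul_assoc, Units.mul_inv, one_mul, mul_one, hQv, Algebra.algebraMap_eq_smul_one]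
    simp only [smul_sub, smul_add, smul_smul]
    rw [hl]
    have h1 : z⁻¹ * z = 1 := inv_mul_cancel₀ hz0
    have h2 : z⁻¹ * z ^ 2 = z := by field_simp
    rw [h1, h2]
    simp only [add_smul, one_smul]
    abel
  set T := (↑Q⁻¹ : X →L[ℂ] X) * (z • F - z ^ 2 • P) with hT
  have hTc : IsCompactOperator T :=
    IsCompactOperator.clm_comp (f := ⇑(z • F - z ^ 2 • P))
      ((hF.smul z).sub (hP.smul (z ^ 2))) (↑Q⁻¹ : X →L[ℂ] X)
  rw [spectrum.mem_iff, not_not, key]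
  have hz' : IsUnit z⁻¹ := (isUnit_iff_ne_zero.2 (inv_ne_zero hz0))
  have h1T : IsUnit (1 - T) := by
    rcases hTc.hasEigenvalue_or_mem_resolventSet (μ := (1 : ℂ)) one_ne_zero with h | h
    · exfalso
      obtain ⟨f, hf⟩ := h.exists_hasEigenvector
      have hf1 : T f = f := by simpa using hf.apply_eq_smul
      apply hf.2
      apply hinj
      have := congrArg (fun U : X →L[ℂ] X => U f) key
      simp only [Algebra.algebraMap_eq_smul_one] at this
      have h3 : ((Q : X →L[ℂ] X) * (1 - T)) f = 0 := by
        change (Q : X →L[ℂ] X) (f - T f) = 0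
        rw [hf1, sub_self, map_zero]
      change l • f - (L + R + F) f = z⁻¹ • (((Q : X →L[ℂ] X) * (1 - T)) f) at this
      rw [h3, smul_zero] at this
      exact (sub_eq_zero.1 this).symm
    · simpa [spectrum.mem_resolventSet_iff] using h
  have : IsUnit ((Q : X →L[ℂ] X) * (1 - T)) := Q.isUnit.mul h1T
  rw [Algebra.smul_def]
  exact (hz'.map (algebraMap ℂ (X →L[ℂ] X))).mul this

end Abstract

section Lp

variable {α : Type*} [DecidableEq α] (p : ℝ≥0∞) [Fact (1 ≤ p)]

theorem toReal_pos_aux (hp : p ≠ ⊤) : 0 < p.toReal :=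
  ENNReal.toReal_pos (zero_lt_one.trans_le Fact.out).ne' hp

open Classical in
theorem pshift_sum_le (hp : p ≠ ⊤) (D : Set α) (s : α → α)
    (hs : Set.InjOn s D) (f : lp (fun _ : α => ℂ) p) (t : Finset α) :
    ∑ x ∈ t, ‖(if x ∈ D then f (s x) else 0 : ℂ)‖ ^ p.toReal ≤ ‖f‖ ^ p.toReal := by
  have h0 := toReal_pos_aux p hp
  have h1 : ∀ x, ‖(if x ∈ D then f (s x) else 0 : ℂ)‖ ^ p.toReal
      = if x ∈ D then ‖f (s x)‖ ^ p.toReal else 0 := by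
    intro x
    split_ifs
    · rfl
    · simp [Real.zero_rpow h0.ne']
  simp only [h1]
  rw [← Finset.sum_filter]
  have hs' : Set.InjOn s (t.filter (· ∈ D) : Finset α) := by
    intro a ha b hb hab
    simp only [Finset.coe_filter, Set.mem_ofPred_eq] at ha hb
    exact hs ha.2 hb.2 hab
  rw [← Finset.sum_image (f := fun y => ‖f y‖ ^ p.toReal) hs']
  exact lp.sum_rpow_le_norm_rpow h0 f _

open Classical in
/-- Partial composition operator on `ℓ^p`. -/
noncomputable def pshift (hp : p ≠ ⊤) (D : Set α) (s : α → α)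
    (hs : Set.InjOn s D) : lp (fun _ : α => ℂ) p →L[ℂ] lp (fun _ : α => ℂ) p :=
  LinearMap.mkContinuous
    { toFun := fun f => ⟨fun x => if x ∈ D then f (s x) else 0,
        memℓp_gen' (pshift_sum_le p hp D s hs f)⟩
      map_add' := by
        intro f g
        ext x
        simp only [lp.coeFn_add, Pi.add_apply]
        split_ifs <;> simp
      map_smul' := by
        intro c f
        ext x
        simp only [lp.coeFn_smul, Pi.smul_apply, RingHom.id_apply]
        split_ifs <;> simp } 1 (by
    intro f
    rw [one_mul]
    exact lp.norm_le_of_forall_sum_le (toReal_pos_aux p hp) (norm_nonneg _)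
      (pshift_sum_le p hp D s hs f))

open Classical in
theorem pshift_apply (hp : p ≠ ⊤) (D : Set α) (s : α → α)
    (hs : Set.InjOn s D) (f : lp (fun _ : α => ℂ) p) (x : α) :
    pshift p hp D s hs f x = if x ∈ D then f (s x) else 0 := rfl

open Classical in
theorem pshift_norm (hp : p ≠ ⊤) (D : Set α) (s : α → α)
    (hs : Set.InjOn s D) : ‖pshift p hp D s hs‖ ≤ 1 :=
  LinearMap.mkContinuous_norm_le _ zero_le_one _

/-- Matrix unit on `ℓ^p`. -/
noncomputable def munit (x y : α) : lp (fun _ : α => ℂ) p →L[ℂ] lp (fun _ : α => ℂ) p :=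
  (lp.singleContinuousLinearMap ℂ (fun _ : α => ℂ) p x).comp (lp.evalCLM ℂ (fun _ : α => ℂ) p y)

theorem munit_apply (x y : α) (f : lp (fun _ : α => ℂ) p) (u : α) :
    munit p x y f u = if u = x then f y else 0 := by
  change (lp.single p x (f y) : lp (fun _ : α => ℂ) p) u = _
  rw [lp.single_apply, Pi.single_apply]

theorem munit_compact (x y : α) : IsCompactOperator (munit p x y) :=
  IsCompactOperator.clm_comp (f := ⇑(lp.evalCLM ℂ (fun _ : α => ℂ) p y))
    (by
      have h := (isCompactOperator_id (E := ℂ)).comp_clm (lp.evalCLM ℂ (fun _ : α => ℂ) p y)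
      simpa using! h)
    (lp.singleContinuousLinearMap ℂ (fun _ : α => ℂ) p x)

theorem sum_compact {ι X : Type*} [NormedAddCommGroup X] [NormedSpace ℂ X] (s : Finset ι)
    (T : ι → X →L[ℂ] X) (h : ∀ i ∈ s, IsCompactOperator (T i)) :
    IsCompactOperator (∑ i ∈ s, T i : X →L[ℂ] X) := by
  classical
  induction s using Finset.induction_on with
  | empty => simpa using! isCompactOperator_zero
  | insert a s ha ih =>
    rw [Finset.sum_insert ha]
    exact (h a (by simp)).add (ih fun i hi => h i (by simp [hi]))

end Lp

section Graph

variable (n : ℕ) (H : SimpleGraph (Fin (n + 1)))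

theorem shift_zero (f : Fin (n + 1) ⊕ ℕ → ℂ) :
    shiftOp (tailed n H) f (Sum.inr 0) = f (Sum.inl 0) + f (Sum.inr 1) := by
  have : (tailed n H).neighborSet (Sum.inr 0) = {Sum.inl 0, Sum.inr 1} := by
    ext x
    rcases x with i | k
    · simp [tailed, tailedRel]
    · simp [tailed, tailedRel]
      omega
  rw [shiftOp, this, finsum_mem_pair (by simp)]

theorem shift_succ (f : Fin (n + 1) ⊕ ℕ → ℂ) (k : ℕ) :
    shiftOp (tailed n H) f (Sum.inr (k + 1)) = f (Sum.inr k) + f (Sum.inr (k + 2)) := by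
  have : (tailed n H).neighborSet (Sum.inr (k + 1)) = {Sum.inr k, Sum.inr (k + 2)} := by
    ext x
    rcases x with i | l
    · simp [tailed, tailedRel]
    · simp [tailed, tailedRel]
      omega
  rw [shiftOp, this, finsum_mem_pair (by simp)]

open Classical in
theorem shift_inl (f : Fin (n + 1) ⊕ ℕ → ℂ) (i : Fin (n + 1)) :
    shiftOp (tailed n H) f (Sum.inl i) = (∑ j, if H.Adj i j then f (Sum.inl j) else 0) +
      if i = 0 then f (Sum.inr 0) else 0 := by
  have : (tailed n H).neighborSet (Sum.inl i) =
      (((Finset.univ.filter (H.Adj i)).disjSum (if i = 0 then {0} else ∅) :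
        Finset (Fin (n + 1) ⊕ ℕ)) : Set (Fin (n + 1) ⊕ ℕ)) := by
    ext x
    rcases x with j | k
    · simp only [tailed, tailedRel, SimpleGraph.mem_neighborSet, SimpleGraph.fromRel_adj]
      simp [H.adj_comm j i]
      intro h
      exact h.ne
    · by_cases hi : i = 0 <;> simp [tailed, tailedRel, hi]
  rw [shiftOp, this, finsum_mem_coe_finset, Finset.sum_disjSum, Finset.sum_filter]
  congr 1
  split_ifs <;> simp

end Graph

section Main

variable (n : ℕ) (H : SimpleGraph (Fin (n + 1))) (p : ℝ≥0∞) [Fact (1 ≤ p)] (hp : p ≠ ⊤)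

/-- Backward shift on the tail. -/
noncomputable def opL : lp (fun _ : Fin (n + 1) ⊕ ℕ => ℂ) p →L[ℂ]
    lp (fun _ : Fin (n + 1) ⊕ ℕ => ℂ) p :=
  pshift p hp (Set.range Sum.inr) (Sum.map id (· + 1)) (by
    rintro _ ⟨k, rfl⟩ _ ⟨l, rfl⟩ h
    simpa using h)

/-- Forward shift on the tail. -/
noncomputable def opR : lp (fun _ : Fin (n + 1) ⊕ ℕ => ℂ) p →L[ℂ]
    lp (fun _ : Fin (n + 1) ⊕ ℕ => ℂ) p :=
  haveI : DecidablePred (· ∈ (Set.range (fun k : ℕ => Sum.inr (k + 1)) :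
    Set (Fin (n + 1) ⊕ ℕ))) := Classical.decPred _
  pshift p hp (Set.range (fun k : ℕ => Sum.inr (k + 1))) (Sum.map id (· - 1)) (by
    rintro _ ⟨k, rfl⟩ _ ⟨l, rfl⟩ h
    simpa using h)

open Classical in
/-- Finite rank part. -/
noncomputable def opF : lp (fun _ : Fin (n + 1) ⊕ ℕ => ℂ) p →L[ℂ]
    lp (fun _ : Fin (n + 1) ⊕ ℕ => ℂ) p :=
  (∑ i, ∑ j ∈ Finset.univ.filter (H.Adj i), munit p (Sum.inl i) (Sum.inl j)) +
    (munit p (Sum.inl 0) (Sum.inr 0) + munit p (Sum.inr 0) (Sum.inl 0))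

/-- Projection to the finite part. -/
noncomputable def opP : lp (fun _ : Fin (n + 1) ⊕ ℕ => ℂ) p →L[ℂ]
    lp (fun _ : Fin (n + 1) ⊕ ℕ => ℂ) p :=
  ∑ i : Fin (n + 1), munit p (Sum.inl i) (Sum.inl i)

theorem opF_compact : IsCompactOperator (opF n H p) := by
  refine IsCompactOperator.add (sum_compact _ _ fun i _ => sum_compact _ _ fun j _ =>
    munit_compact _ _ _) ((munit_compact _ _ _).add (munit_compact _ _ _))

theorem opP_compact : IsCompactOperator (opP n p) :=
  sum_compact _ _ fun i _ => munit_compact _ _ _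

variable (f : lp (fun _ : Fin (n + 1) ⊕ ℕ => ℂ) p)

theorem opL_inl (i : Fin (n + 1)) : opL n p hp f (Sum.inl i) = 0 := by
  exact (pshift_apply p hp _ _ _ f _).trans (by simp)

theorem opL_inr (k : ℕ) : opL n p hp f (Sum.inr k) = f (Sum.inr (k + 1)) := by
  exact (pshift_apply p hp _ _ _ f _).trans (by simp)

theorem opR_inl (i : Fin (n + 1)) : opR n p hp f (Sum.inl i) = 0 := by
  exact (pshift_apply p hp _ _ _ f _).trans (by simp)

theorem opR_zero : opR n p hp f (Sum.inr 0) = 0 := by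
  exact (pshift_apply p hp _ _ _ f _).trans (by simp)

theorem opR_succ (k : ℕ) : opR n p hp f (Sum.inr (k + 1)) = f (Sum.inr k) := by
  exact (pshift_apply p hp _ _ _ f _).trans (by simp)

theorem clm_sum_apply_apply {ι : Type*} (s : Finset ι)
    (T : ι → lp (fun _ : Fin (n + 1) ⊕ ℕ => ℂ) p →L[ℂ] lp (fun _ : Fin (n + 1) ⊕ ℕ => ℂ) p)
    (x : Fin (n + 1) ⊕ ℕ) : (∑ i ∈ s, T i) f x = ∑ i ∈ s, T i f x := by
  rw [sum_apply, lp.coeFn_sum, Finset.sum_apply]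

theorem opP_inl (i : Fin (n + 1)) : opP n p f (Sum.inl i) = f (Sum.inl i) := by
  rw [opP, clm_sum_apply_apply]; simp [munit_apply]

theorem opP_inr (k : ℕ) : opP n p f (Sum.inr k) = 0 := by
  rw [opP, clm_sum_apply_apply]; simp [munit_apply]

theorem opLR : opL n p hp * opR n p hp = 1 - opP n p := by
  ext f x
  rcases x with i | k
  · simp [opL_inl, opP_inl]
  · simp [opL_inr, opP_inr, opR_succ]

/-- The shift operator. -/
noncomputable def opS : lp (fun _ : Fin (n + 1) ⊕ ℕ => ℂ) p →L[ℂ]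
    lp (fun _ : Fin (n + 1) ⊕ ℕ => ℂ) p := opL n p hp + opR n p hp + opF n H p

open Classical in
theorem opF_apply (x : Fin (n + 1) ⊕ ℕ) : opF n H p f x =
    (∑ i, ∑ j ∈ Finset.univ.filter (H.Adj i), if x = Sum.inl i then f (Sum.inl j) else 0) +
    ((if x = Sum.inl 0 then f (Sum.inr 0) else 0) +
      if x = Sum.inr 0 then f (Sum.inl 0) else 0) := by
  simp only [opF, add_apply, lp.coeFn_add, Pi.add_apply, clm_sum_apply_apply,
    munit_apply]
  

theorem opS_apply (x : Fin (n + 1) ⊕ ℕ) :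
    opS n H p hp f x = shiftOp (tailed n H) (fun y => f y) x := by
  classical
  simp only [opS, add_apply, lp.coeFn_add, Pi.add_apply, opF_apply]
  rcases x with i | _ | k
  · rw [shift_inl, opL_inl, opR_inl]
    simp [Finset.sum_filter]
  · rw [shift_zero, opL_inr, opR_zero]
    simp [add_comm]
  · rw [shift_succ, opL_inr, opR_succ]
    simp only [reduceCtorEq, if_false, Finset.sum_const_zero, Sum.inr.injEq, Nat.succ_ne_zero,
      add_zero]
    exact add_comm _ _

/-- basis vector of the tail -/
noncomputable def ev (k : ℕ) : lp (fun _ : Fin (n + 1) ⊕ ℕ => ℂ) p := lp.single p (Sum.inr k) 1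

theorem opS_ev (k : ℕ) : opS n H p hp (ev n p (k + 1)) = ev n p k + ev n p (k + 2) := by
  ext x
  rw [opS_apply]
  rcases x with i | _ | l
  · rw [shift_inl]
    simp [ev, Pi.single_apply]
  · rw [shift_zero]
    simp [ev, Pi.single_apply, eq_comm]
  · rw [shift_succ]
    simp [ev, Pi.single_apply]
    exact add_comm _ _

theorem ev_norm (k : ℕ) : ‖ev n p k‖ = 1 := by
  rw [ev, lp.norm_single (zero_lt_one.trans_le Fact.out)]
  simp

theorem telescoping (z : ℂ) (hz : z ≠ 0) (N : ℕ) :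
    (z + z⁻¹) • (∑ k ∈ Finset.range N, z ^ k • ev n p (k + 1))
      - opS n H p hp (∑ k ∈ Finset.range N, z ^ k • ev n p (k + 1))
      = z ^ N • (ev n p N - z⁻¹ • ev n p (N + 1)) - (ev n p 0 - z⁻¹ • ev n p 1) := by
  induction N with
  | zero => simp
  | succ N ih =>
    rw [Finset.sum_range_succ, map_add, smul_add, add_sub_add_comm, ih, map_smul, opS_ev]
    match_scalars <;> field_simp <;> ring

theorem mem_spec (z : ℂ) (hz : ‖z‖ = 1) : z + z⁻¹ ∈ spectrum ℂ (opS n H p hp) := by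
  have hz0 : z ≠ 0 := by
    rintro rfl
    simp at hz
  rw [spectrum.mem_iff]
  rintro ⟨U, hU⟩
  set C := ‖(↑U⁻¹ : lp (fun _ : Fin (n + 1) ⊕ ℕ => ℂ) p →L[ℂ] lp (fun _ : Fin (n + 1) ⊕ ℕ => ℂ) p)‖ with hC
  have h0 := toReal_pos_aux p hp
  have bound : ∀ N : ℕ, (N : ℝ) ≤ (C * 4) ^ p.toReal := by
    intro N
    set g := ∑ k ∈ Finset.range N, z ^ k • ev n p (k + 1) with hg
    have h1 : ‖(U : lp (fun _ : Fin (n + 1) ⊕ ℕ => ℂ) p →L[ℂ] lp (fun _ : Fin (n + 1) ⊕ ℕ => ℂ) p) g‖ ≤ 4 := by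
      rw [hU, Algebra.algebraMap_eq_smul_one]
      simp only [sub_apply, smul_apply,
        one_apply_eq_self]
      rw [hg, telescoping n H p hp z hz0]
      have e : ∀ k, ‖ev n p k - z⁻¹ • ev n p (k + 1)‖ ≤ 2 := by
        intro k
        refine (norm_sub_le _ _).trans ?_
        rw [norm_smul, ev_norm, ev_norm, norm_inv, hz]
        norm_num
      refine (norm_sub_le _ _).trans ?_
      rw [norm_smul, norm_pow, hz, one_pow, one_mul]
      have e0 := e 0
      rw [zero_add] at e0
      linarith [e N]
    have h2 : ‖g‖ ≤ C * 4 := by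
      have : g = (↑U⁻¹ : lp (fun _ : Fin (n + 1) ⊕ ℕ => ℂ) p →L[ℂ] lp (fun _ : Fin (n + 1) ⊕ ℕ => ℂ) p)
          ((U : lp (fun _ : Fin (n + 1) ⊕ ℕ => ℂ) p →L[ℂ] lp (fun _ : Fin (n + 1) ⊕ ℕ => ℂ) p) g) := by
        rw [← mul_apply_eq_comp, Units.inv_mul, one_apply_eq_self]
      rw [this]
      exact (ContinuousLinearMap.le_opNorm _ _).trans (by gcongr)
    have h3 : (N : ℝ) ≤ ‖g‖ ^ p.toReal := by
      have := lp.sum_rpow_le_norm_rpow h0 g ((Finset.range N).image fun k => Sum.inr (k + 1))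
      rw [Finset.sum_image (by intro a _ b _ h; simpa using h)] at this
      refine le_trans (le_of_eq ?_) this
      have e : ∀ k ∈ Finset.range N, ‖g (Sum.inr (k + 1))‖ ^ p.toReal = 1 := by
        intro k hk
        have : g (Sum.inr (k + 1)) = z ^ k := by
          rw [hg, lp.coeFn_sum, Finset.sum_apply, Finset.sum_eq_single k]
          · simp [ev]
          · intro b _ hb
            simp [ev, Pi.single_apply, hb.symm]
          · intro h
            exact absurd hk h
        rw [this, norm_pow, hz]
        simp
      rw [Finset.sum_congr rfl e]
      simp
    exact h3.trans (Real.rpow_le_rpow (norm_nonneg _) h2 h0.le)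
  obtain ⟨N, hN⟩ := exists_nat_gt ((C * 4) ^ p.toReal)
  exact absurd (bound N) (not_le.2 hN)

end Main

theorem exists_root (l : ℂ) : ∃ z : ℂ, z ≠ 0 ∧ ‖z‖ ≤ 1 ∧ l = z + z⁻¹ := by
  obtain ⟨d, hd⟩ := IsAlgClosed.exists_pow_nat_eq (l ^ 2 - 4) (n := 2) (by norm_num)
  have hm : ((l + d) / 2) * ((l - d) / 2) = 1 := by linear_combination (-1 / 4) * hd
  have h1 : (l + d) / 2 ≠ 0 := left_ne_zero_of_mul_eq_one hm
  have h2 : (l - d) / 2 ≠ 0 := right_ne_zero_of_mul_eq_one hm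
  have hn : ‖(l + d) / 2‖ * ‖(l - d) / 2‖ = 1 := by rw [← norm_mul, hm, norm_one]
  rcases le_total ‖(l + d) / 2‖ 1 with h | h
  · refine ⟨_, h1, h, ?_⟩
    rw [inv_eq_of_mul_eq_one_right hm]
    ring
  · refine ⟨_, h2, ?_, ?_⟩
    · nlinarith [norm_nonneg ((l - d) / 2)]
    · rw [inv_eq_of_mul_eq_one_left hm]
      ring

/-- Let `H` be a finite connected graph on `v_0, …, v_n` and let `G_H`
be `H` with an infinite tail attached at `v_0`. For `1 ≤ p < ∞`, the shift is a bounded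
operator on `ℓ^p(G_H)` and its spectrum equals `[−2, 2]` together with the set of
eigenvalues of the shift. -/
theorem stmt19 (n : ℕ) (H : SimpleGraph (Fin (n + 1))) (hH : H.Connected)
    (p : ℝ≥0∞) [Fact (1 ≤ p)] (hp : p ≠ ⊤) :
    ∃ S : lp (fun _ : Fin (n + 1) ⊕ ℕ => ℂ) p →L[ℂ] lp (fun _ : Fin (n + 1) ⊕ ℕ => ℂ) p,
      (∀ (f : lp (fun _ : Fin (n + 1) ⊕ ℕ => ℂ) p) (x : Fin (n + 1) ⊕ ℕ),
        (S f) x = shiftOp (tailed n H) (fun y => f y) x) ∧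
      spectrum ℂ S =
        ((fun t : ℝ => (t : ℂ)) '' Set.Icc (-2) 2) ∪
        {z : ℂ | ∃ f : (Fin (n + 1) ⊕ ℕ) → ℂ, f ≠ 0 ∧ Memℓp f p ∧
          ∀ x, shiftOp (tailed n H) f x = z * f x} := by
  refine ⟨opS n H p hp, opS_apply n H p hp, ?_⟩
  apply Set.Subset.antisymm
  · intro l hl
    by_contra hcon
    rw [Set.mem_union, not_or] at hcon
    obtain ⟨hc1, hc2⟩ := hcon
    obtain ⟨z, hz0, hz1, hlz⟩ := exists_root l
    rcases hz1.lt_or_eq with hz | hz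
    · refine fredholm_aux (opL n p hp) (opR n p hp) (opF n H p) (opP n p)
        (pshift_norm _ _ _ _ _) (pshift_norm _ _ _ _ _) (opLR n p hp) (opF_compact n H p)
        (opP_compact n p) z l hz0 hz hlz ?_ hl
      intro f hf
      by_contra hf0
      refine hc2 ⟨fun y => f y, ?_, lp.memℓp f, ?_⟩
      · intro h
        exact hf0 (lp.ext h)
      · intro x
        rw [← opS_apply n H p hp, opS, hf]
        simp
    · apply hc1
      have hr : |z.re| ≤ 1 := (Complex.abs_re_le_norm z).trans hz1
      refine ⟨2 * z.re, ⟨by linarith [(abs_le.1 hr).1], by linarith [(abs_le.1 hr).2]⟩, ?_⟩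
      rw [hlz, Complex.inv_def, Complex.normSq_eq_norm_sq, hz]
      simp [Complex.add_conj]
  · rintro l (⟨t, ht, rfl⟩ | ⟨f, hf0, hfm, hf⟩)
    · have hs : 0 ≤ 1 - (t / 2) ^ 2 := by nlinarith [ht.1, ht.2]
      set z : ℂ := ⟨t / 2, Real.sqrt (1 - (t / 2) ^ 2)⟩ with hzdef
      have hsq : Complex.normSq z = 1 := by
        rw [Complex.normSq_apply, hzdef]
        simp only [Real.mul_self_sqrt hs]
        ring
      have hz : ‖z‖ = 1 := by
        rw [Complex.normSq_eq_norm_sq] at hsq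
        nlinarith [norm_nonneg z]
      have := mem_spec n H p hp z hz
      rw [Complex.inv_def, hsq] at this
      convert this using 1
      simp [Complex.add_conj, hzdef]
      ring
    · rw [spectrum.mem_iff, ContinuousLinearMap.isUnit_iff_bijective]
      intro hb
      apply hf0
      have h0 : (⟨f, hfm⟩ : lp (fun _ : Fin (n + 1) ⊕ ℕ => ℂ) p) = 0 := by
        apply hb.1
        rw [map_zero]
        ext x
        rw [Algebra.algebraMap_eq_smul_one]
        simp only [sub_apply, lp.coeFn_sub, Pi.sub_apply, opS_apply]
        have := hf x
        simp [this]
      exact congrArg (fun g : lp (fun _ : Fin (n + 1) ⊕ ℕ => ℂ) p => (g : _ → ℂ)) h0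
end
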